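/- Fix a > 0 and n ∈ ℕ. The set {φ^{♯n} : φ ∈ L²([0,a))} ⊆ L²([0,na)) is gap-rich with empty exceptional set; equivalently, the map (φ,E) ↦ B(φ^{♯n},E) = B(φ,E)^n, extended multiplicatively to words, is gap-rich with empty exceptional set. -/

import Mathlib

open Set MeasureTheory BoundedContinuousFunction

noncomputable section

/-- `L²(ℝ)`. -/
abbrev L2R := Lp ℝ 2 (volume : Measure ℝ)

/-- `L²([0,a))`. -/
abbrev L2I (a : ℝ) := Lp ℝ 2 (volume.restrict (Ico (0 : ℝ) a))

/-- `g` and `h` satisfy `(-d²/dx² + (V - E)) g = h` in the distributional sense. -/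
def WeakSchrodingerEq (V : ℝ → ℝ) (E : ℝ) (g h : L2R) : Prop :=
  ∀ φ : ℝ → ℝ, ContDiff ℝ (⊤ : ℕ∞) φ → HasCompactSupport φ →
    ∫ x, g x * (-(deriv (deriv φ) x) + (V x - E) * φ x) = ∫ x, h x * φ x

/-- The spectrum of the continuum Schrödinger operator `L_V = -d²/dx² + V` on
`L²(ℝ)`: `E` is in the spectrum iff there is no bounded operator `T` inverting
`L_V - E` (in the distributional sense). -/
def ContSpectrum (V : ℝ → ℝ) : Set ℝ :=
  {E : ℝ | ¬ ∃ T : L2R →L[ℝ] L2R,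
      (∀ f : L2R, WeakSchrodingerEq V E (T f) f) ∧
      (∀ g h : L2R, WeakSchrodingerEq V E g h → T h = g)}

/-- A subset of ℝ is discrete if it has no accumulation points. -/
def IsDiscreteSet (S : Set ℝ) : Prop := ∀ x : ℝ, ¬ AccPt x (Filter.principal S)

/-- Periodic extension `w^{♯ℤ}` of a finite word `w`. -/
def perExt {α : Type*} [Zero α] {m : ℕ} (w : Fin m → α) : ℤ → α :=
  fun n =>
    if h : 0 < m then
      w ⟨(n % (m : ℤ)).toNat, by
        have h1 : 0 ≤ n % (m : ℤ) := Int.emod_nonneg n (by exact_mod_cast h.ne')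
        have h2 : n % (m : ℤ) < (m : ℤ) := Int.emod_lt_of_pos n (by exact_mod_cast h)
        omega⟩
    else 0

/-- Concatenation `y^♮ : ℝ → ℝ` of a bi-infinite sequence of pieces in
`L²([0,a))`: `y^♮(ja + t) = y_j(t)` for `t ∈ [0,a)`. -/
def aggC (a : ℝ) (y : ℤ → L2I a) : ℝ → ℝ :=
  fun t => (y ⌊t / a⌋) (t - (⌊t / a⌋ : ℝ) * a)

/-- `Y ⊆ L²([0,a))` is gap-rich with exceptional set `S`. -/
def GapRichC (a : ℝ) (Y : Set (L2I a)) (S : Set ℝ) : Prop :=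
  IsDiscreteSet S ∧
  ∀ E : ℝ, E ∉ S → ∀ m : ℕ, 0 < m → ∀ x : Fin m → L2I a, (∀ i, x i ∈ Y) →
    ∀ ε : ℝ, 0 < ε →
      ∃ l : ℕ, 0 < l ∧ ∃ y : Fin l → L2I a,
        (∀ i, y i ∈ Y) ∧
        (∀ j : ℤ, dist (perExt x j) (perExt y j) < ε) ∧
        E ∉ ContSpectrum (aggC a (perExt y))

/-- The periodic elements of `Y^ℤ`. -/
def PerC (a : ℝ) (Y : Set (L2I a)) : Set (ℤ →ᵇ L2I a) :=
  {x | (∃ q : ℕ, 0 < q ∧ ∀ n : ℤ, x (n + q) = x n) ∧ ∀ n : ℤ, x n ∈ Y}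

/-- The limit-periodic elements of `Y^ℤ`. -/
def LPC (a : ℝ) (Y : Set (L2I a)) : Set (ℤ →ᵇ L2I a) := closure (PerC a Y)

/-- Cantor set of zero Hausdorff dimension (continuum case: closed, possibly
unbounded). -/
def IsZeroDimCantorC (s : Set ℝ) : Prop :=
  s.Nonempty ∧ IsClosed s ∧ Preperfect s ∧ interior s = ∅ ∧ dimH s = 0

/-- The set of `n`-fold self-concatenations `{φ^{♯n} : φ ∈ L²([0,a))} ⊆ L²([0,na))`,
described by its almost-everywhere values: there is `φ ∈ L²([0,a))` such that on
each block `[ja, (j+1)a)`, `0 ≤ j < n`, the element agrees with `φ(· - ja)`. -/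
def repeatSet (a : ℝ) (n : ℕ) : Set (L2I (n * a)) :=
  {χ | ∃ φ : L2I a, ∀ j : ℕ, j < n →
    (∀ᵐ t ∂(volume.restrict (Ico (0 : ℝ) a)), χ (t + j * a) = φ t)}

/-!
Hyperbolic monodromy at energy `E` puts `E` in the resolvent set, so it is enough to perturb the
given word of repeated blocks to a longer one whose monodromy is hyperbolic.

*Hyperbolicity.* By density the blocks may be taken smooth with compact support in `(0, a)`. Such a
potential can be changed by a small amount so that its transfer matrix `X` becomes `X (1 + δ N)`,
with `N` either elementary nilpotent matrix and `δ` any small number: the solutions of the perturbed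
equation are written down explicitly. A linear functional vanishing on the `n`-th powers of all
transfer matrices reached in this way is polynomial in `δ`, so it vanishes on the `n`-th powers of
all of `SL(2,ℝ)`, and these span the `2 × 2` matrices. Multiplying by the `n`-th powers belonging to
the other blocks of the word preserves this, and a spanning subset of `SL(2,ℝ)` has a hyperbolic
product: otherwise the inverse of every product would be a limit of products, while some two
noncommuting elliptic products satisfy `tr (A B A⁻¹ B⁻¹) > 2`. No energy is exceptional.

*Resolvent set.* Hyperbolic monodromy provides Floquet solutions decaying exponentially at `+∞` and
at `-∞`. Variation of constants bounds `‖φ‖` by a multiple of `‖-φ'' + (V - E) φ‖` in `L²` for test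
functions `φ`, and shows that the functions `-φ'' + (V - E) φ` are dense. The map
`-φ'' + (V - E) φ ↦ φ` therefore extends to a bounded operator on `L²`, which is the resolvent by
symmetry and density.
-/

/-! ### Linear differential equations -/

section LinearODE

open scoped Topology

variable {E : Type*} [NormedAddCommGroup E] [NormedSpace ℝ E]

/-- The weight `cosh (2 ∫₀ᵗ ‖A‖)`, in which the Picard operator of `y' = A y` is a contraction. -/
def picardWeight (A : ℝ → E →L[ℝ] E) (t : ℝ) : ℝ := Real.cosh (2 * ∫ s in (0 : ℝ)..t, ‖A s‖)

variable {A : ℝ → E →L[ℝ] E}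

lemma picardWeight_pos (t : ℝ) : 0 < picardWeight A t := Real.cosh_pos _

lemma continuous_picardWeight (hA : Continuous A) : Continuous (picardWeight A) :=
  Real.continuous_cosh.comp <| continuous_const.mul <|
    intervalIntegral.continuous_primitive (fun _ _ => hA.norm.intervalIntegrable _ _) _

lemma abs_integral_mul_picardWeight_le (hA : Continuous A) (x : ℝ) :
    |∫ t in (0 : ℝ)..x, ‖A t‖ * picardWeight A t| ≤ picardWeight A x / 2 := by
  have hderiv (t : ℝ) : HasDerivAt (fun t => Real.sinh (2 * ∫ s in (0 : ℝ)..t, ‖A s‖) / 2)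
      (‖A t‖ * picardWeight A t) t := by
    have h := (((hA.norm.integral_hasStrictDerivAt 0 t).hasDerivAt.const_mul 2).sinh).div_const 2
    exact h.congr_deriv (by unfold picardWeight; ring)
  rw [intervalIntegral.integral_eq_sub_of_hasDerivAt (fun t _ => hderiv t)
    ((hA.norm.mul (continuous_picardWeight hA)).intervalIntegrable _ _)]
  have habs (y : ℝ) : |Real.sinh y| ≤ Real.cosh y :=
    abs_le_of_sq_le_sq (by linarith [Real.cosh_sq y]) (Real.cosh_pos y).le
  simpa [abs_div, picardWeight] using
    div_le_div_of_nonneg_right (habs (2 * ∫ s in (0 : ℝ)..x, ‖A s‖)) zero_le_two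

lemma continuous_apply_weight_smul (hA : Continuous A) (z : ℝ →ᵇ E) :
    Continuous fun t => A t (picardWeight A t • z t) :=
  hA.clm_apply ((continuous_picardWeight hA).smul z.continuous)

lemma norm_weighted_integral_le (hA : Continuous A) (z : ℝ →ᵇ E) (x : ℝ) :
    ‖(picardWeight A x)⁻¹ • ∫ t in (0 : ℝ)..x, A t (picardWeight A t • z t)‖ ≤ 1 / 2 * ‖z‖ := by
  have hw := picardWeight_pos (A := A)
  have hpoint (t : ℝ) : ‖A t (picardWeight A t • z t)‖ ≤ ‖A t‖ * picardWeight A t * ‖z‖ := by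
    refine (A t).le_opNorm _ |>.trans ?_
    rw [norm_smul, Real.norm_of_nonneg (hw t).le, mul_assoc]
    gcongr
    · exact (hw t).le
    · exact z.norm_coe_le_norm t
  have hint : ‖∫ t in (0 : ℝ)..x, A t (picardWeight A t • z t)‖ ≤ picardWeight A x / 2 * ‖z‖ :=
    calc _ ≤ |∫ t in (0 : ℝ)..x, ‖A t‖ * picardWeight A t * ‖z‖| :=
          intervalIntegral.norm_integral_le_abs_of_norm_le (.of_forall hpoint)
            (((hA.norm.mul (continuous_picardWeight hA)).mul_const _).intervalIntegrable _ _)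
      _ = |∫ t in (0 : ℝ)..x, ‖A t‖ * picardWeight A t| * ‖z‖ := by
          rw [intervalIntegral.integral_mul_const, abs_mul, abs_norm]
      _ ≤ _ := by gcongr; exact abs_integral_mul_picardWeight_le hA x
  rw [norm_smul, norm_inv, Real.norm_of_nonneg (hw x).le, inv_mul_le_iff₀ (hw x)]
  linarith

/-- The linear part of the Picard operator of `y' = A y`, acting on `z = y / picardWeight A`. -/
def weightedPicard (hA : Continuous A) : (ℝ →ᵇ E) →L[ℝ] (ℝ →ᵇ E) :=
  LinearMap.mkContinuous
    { toFun := fun z => .ofNormedAddCommGroup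
        (fun x => (picardWeight A x)⁻¹ • ∫ t in (0 : ℝ)..x, A t (picardWeight A t • z t))
        (((continuous_picardWeight hA).inv₀ fun t => (picardWeight_pos t).ne').smul <|
          intervalIntegral.continuous_primitive
            (fun _ _ => (continuous_apply_weight_smul hA z).intervalIntegrable _ _) _)
        (1 / 2 * ‖z‖) (norm_weighted_integral_le hA z)
      map_add' := fun y z => by
        ext x
        simp only [coe_ofNormedAddCommGroup, coe_add, Pi.add_apply, smul_add, map_add]
        rw [intervalIntegral.integral_add
          ((continuous_apply_weight_smul hA y).intervalIntegrable _ _)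
          ((continuous_apply_weight_smul hA z).intervalIntegrable _ _), smul_add]
      map_smul' := fun c z => by
        ext x
        simp only [coe_ofNormedAddCommGroup, coe_smul, map_smul, smul_comm _ c,
          intervalIntegral.integral_smul, RingHom.id_apply] }
    (1 / 2) fun z => (norm_le (by positivity)).2 (norm_weighted_integral_le hA z)

lemma norm_weightedPicard_lt_one (hA : Continuous A) : ‖weightedPicard hA‖ < 1 :=
  (LinearMap.mkContinuous_norm_le _ (by norm_num) _).trans_lt (by norm_num)

variable [CompleteSpace E]

lemma exists_forall_eq_add_integral (hA : Continuous A) (y₀ : E) :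
    ∃ y : ℝ → E, Continuous y ∧ ∀ x, y x = y₀ + ∫ t in (0 : ℝ)..x, A t (y t) := by
  let w := picardWeight A
  have hw (t : ℝ) : w t ≠ 0 := (picardWeight_pos t).ne'
  have hwc : Continuous w := continuous_picardWeight hA
  let b : ℝ →ᵇ E := .ofNormedAddCommGroup (fun x => (w x)⁻¹ • y₀)
    ((hwc.inv₀ hw).smul continuous_const) ‖y₀‖ fun x => by
      rw [norm_smul, norm_inv, Real.norm_of_nonneg (picardWeight_pos x).le]
      exact mul_le_of_le_one_left (norm_nonneg _) (inv_le_one_of_one_le₀ (Real.one_le_cosh _))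
  let u := Units.oneSub (weightedPicard hA) (norm_weightedPicard_lt_one hA)
  let z : ℝ →ᵇ E := (↑u⁻¹ : (ℝ →ᵇ E) →L[ℝ] (ℝ →ᵇ E)) b
  have hz : z - weightedPicard hA z = b := DFunLike.congr_fun u.mul_inv b
  refine ⟨fun x => w x • z x, hwc.smul z.continuous, fun x => ?_⟩
  have hzx : z x = (w x)⁻¹ • y₀ + (w x)⁻¹ • ∫ t in (0 : ℝ)..x, A t (w t • z t) :=
    DFunLike.congr_fun (sub_eq_iff_eq_add.1 hz) x
  calc w x • z x = w x • ((w x)⁻¹ • (y₀ + ∫ t in (0 : ℝ)..x, A t (w t • z t))) := by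
        rw [hzx, ← smul_add]
    _ = _ := smul_inv_smul₀ (hw x) _

theorem exists_isIntegralCurve_clm (hA : Continuous A) (y₀ : E) :
    ∃ y : ℝ → E, y 0 = y₀ ∧ IsIntegralCurve y fun t => A t := by
  obtain ⟨y, hy, hfix⟩ := exists_forall_eq_add_integral hA y₀
  refine ⟨y, by simpa using hfix 0, fun t => ?_⟩
  have h := ((hA.clm_apply hy).integral_hasStrictDerivAt 0 t).hasDerivAt.const_add y₀
  exact h.congr_of_eventuallyEq (.of_forall hfix)

end LinearODE

/-! ### Solutions and transfer matrices of `u'' = q u` -/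

/-- `u` solves `u'' = q u` and `u'` is its derivative. -/
structure IsSol (q u u' : ℝ → ℝ) : Prop where
  hasDerivAt (x : ℝ) : HasDerivAt u (u' x) x
  hasDerivAt' (x : ℝ) : HasDerivAt u' (q x * u x) x

namespace IsSol

variable {p q u u' v v' : ℝ → ℝ}

lemma continuous (h : IsSol q u u') : Continuous u :=
  continuous_iff_continuousAt.2 fun x => (h.hasDerivAt x).continuousAt

lemma continuous' (h : IsSol q u u') : Continuous u' :=
  continuous_iff_continuousAt.2 fun x => (h.hasDerivAt' x).continuousAt

lemma contDiff_nat (h : IsSol q u u') (hq : ContDiff ℝ (⊤ : ℕ∞) q) (n : ℕ) :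
    ContDiff ℝ n u ∧ ContDiff ℝ n u' := by
  induction n with
  | zero =>
    simp only [Nat.cast_zero, contDiff_zero]
    exact ⟨h.continuous, h.continuous'⟩
  | succ n ih =>
    have hderiv : deriv u = u' := funext fun x => (h.hasDerivAt x).deriv
    have hderiv' : deriv u' = fun x => q x * u x := funext fun x => (h.hasDerivAt' x).deriv
    push_cast
    rw [contDiff_succ_iff_deriv, contDiff_succ_iff_deriv, hderiv, hderiv']
    exact ⟨⟨fun x => (h.hasDerivAt x).differentiableAt, by simp, ih.2⟩,
      fun x => (h.hasDerivAt' x).differentiableAt, by simp,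
      (hq.of_le (by exact_mod_cast le_top)).mul ih.1⟩

lemma contDiff (h : IsSol q u u') (hq : ContDiff ℝ (⊤ : ℕ∞) q) : ContDiff ℝ (⊤ : ℕ∞) u :=
  contDiff_infty.2 fun n => (h.contDiff_nat hq n).1

lemma contDiff' (h : IsSol q u u') (hq : ContDiff ℝ (⊤ : ℕ∞) q) : ContDiff ℝ (⊤ : ℕ∞) u' :=
  contDiff_infty.2 fun n => (h.contDiff_nat hq n).2

lemma linear_comb (h : IsSol q u u') (k : IsSol q v v') (α β : ℝ) :
    IsSol q (fun x => u x * α + v x * β) fun x => u' x * α + v' x * β where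
  hasDerivAt x := ((h.hasDerivAt x).mul_const α).add ((k.hasDerivAt x).mul_const β)
  hasDerivAt' x := (((h.hasDerivAt' x).mul_const α).add
    ((k.hasDerivAt' x).mul_const β)).congr_deriv (by ring)

lemma comp_const_add (h : IsSol q u u') (x₀ : ℝ) :
    IsSol (fun t => q (x₀ + t)) (fun t => u (x₀ + t)) fun t => u' (x₀ + t) where
  hasDerivAt t := (h.hasDerivAt (x₀ + t)).comp_const_add x₀ t
  hasDerivAt' t := (h.hasDerivAt' (x₀ + t)).comp_const_add x₀ t

lemma wronskian_eq (h : IsSol p u u') (k : IsSol q v v') {x y : ℝ} (hpq : EqOn p q (uIcc x y)) :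
    u x * v' x - u' x * v x = u y * v' y - u' y * v y := by
  have hderiv : ∀ t ∈ uIcc x y, HasDerivAt (fun t => u t * v' t - u' t * v t) 0 t := fun t ht =>
    (((h.hasDerivAt t).mul (k.hasDerivAt' t)).sub
      ((h.hasDerivAt' t).mul (k.hasDerivAt t))).congr_deriv (by rw [hpq ht]; ring)
  have hint := intervalIntegral.integral_eq_sub_of_hasDerivAt hderiv intervalIntegrable_const
  simp only [intervalIntegral.integral_zero] at hint
  linarith

end IsSol

theorem exists_isSol {q : ℝ → ℝ} (hq : Continuous q) (α β : ℝ) :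
    ∃ u u', IsSol q u u' ∧ u 0 = α ∧ u' 0 = β := by
  let A (t : ℝ) : ℝ × ℝ →L[ℝ] ℝ × ℝ :=
    (ContinuousLinearMap.snd ℝ ℝ ℝ).prod (q t • ContinuousLinearMap.fst ℝ ℝ ℝ)
  have hA : Continuous A :=
    (ContinuousLinearMap.prodₗᵢ ℝ).continuous.comp
      (continuous_const.prodMk (hq.smul continuous_const))
  obtain ⟨y, hy₀, hy⟩ := exists_isIntegralCurve_clm hA (α, β)
  exact ⟨fun t => (y t).1, fun t => (y t).2,
    ⟨fun t => (hy t).fst, fun t => (hy t).snd⟩, by simp [hy₀], by simp [hy₀]⟩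

/-- Real `2 × 2` matrices. -/
abbrev Mat2 := Matrix (Fin 2) (Fin 2) ℝ

/-- The columns `(u, u')` of `Φ` solve `u'' = q u`; that is, `Φ' = !![0, 1; q, 0] * Φ`. -/
def IsSolMatrix (q : ℝ → ℝ) (Φ : ℝ → Mat2) : Prop :=
  ∀ j, IsSol q (fun x => Φ x 0 j) fun x => Φ x 1 j

theorem exists_isSolMatrix {q : ℝ → ℝ} (hq : Continuous q) (S : Mat2) :
    ∃ Φ, IsSolMatrix q Φ ∧ Φ 0 = S := by
  choose u u' h h₀ h₀' using fun j => exists_isSol hq (S 0 j) (S 1 j)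
  refine ⟨fun x => .of ![fun j => u j x, fun j => u' j x], h, ?_⟩
  ext i j
  fin_cases i
  exacts [h₀ j, h₀' j]

namespace IsSolMatrix

variable {p q : ℝ → ℝ} {Φ Ψ : ℝ → Mat2}

lemma continuous_apply (h : IsSolMatrix q Φ) (i j : Fin 2) : Continuous fun x => Φ x i j := by
  fin_cases i
  exacts [(h j).continuous, (h j).continuous']

lemma mul_const (h : IsSolMatrix q Φ) (S : Mat2) : IsSolMatrix q fun x => Φ x * S := fun j => by
  simpa only [Matrix.mul_apply, Fin.sum_univ_two] using (h 0).linear_comb (h 1) (S 0 j) (S 1 j)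

lemma comp_const_add (h : IsSolMatrix q Φ) (x₀ : ℝ) :
    IsSolMatrix (fun t => q (x₀ + t)) fun t => Φ (x₀ + t) :=
  fun j => (h j).comp_const_add x₀

/-- The entries of this product are the Wronskians of the columns. -/
lemma adjugate_mul_eq (h : IsSolMatrix p Φ) (k : IsSolMatrix q Ψ) {x y : ℝ}
    (hpq : EqOn p q (uIcc x y)) : (Φ x).adjugate * Ψ x = (Φ y).adjugate * Ψ y := by
  ext i j
  have hw (i : Fin 2) := (h i).wronskian_eq (k j) hpq
  fin_cases i
  · simpa [Matrix.mul_apply, Matrix.adjugate_fin_two, sub_eq_neg_add, add_comm, mul_comm]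
      using congrArg Neg.neg (hw 1)
  · simpa [Matrix.mul_apply, Matrix.adjugate_fin_two, sub_eq_neg_add] using hw 0

lemma det_eq (h : IsSolMatrix q Φ) (x y : ℝ) : (Φ x).det = (Φ y).det := by
  have hW := h.adjugate_mul_eq h (eqOn_refl q (uIcc x y))
  rw [Matrix.adjugate_mul, Matrix.adjugate_mul] at hW
  simpa using congrFun₂ hW 0 0

end IsSolMatrix

/-- `B` is the transfer matrix of `u'' = q u` from `0` to `a`, mapping `(u 0, u' 0)` to
`(u a, u' a)`. -/
def IsTransfer (q : ℝ → ℝ) (a : ℝ) (B : Mat2) : Prop :=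
  ∃ Φ, IsSolMatrix q Φ ∧ Φ 0 = 1 ∧ Φ a = B

theorem exists_isTransfer {q : ℝ → ℝ} (hq : Continuous q) (a : ℝ) : ∃ B, IsTransfer q a B := by
  obtain ⟨Φ, hΦ, hΦ₀⟩ := exists_isSolMatrix hq 1
  exact ⟨Φ a, Φ, hΦ, hΦ₀, rfl⟩

namespace IsTransfer

variable {p q : ℝ → ℝ} {a x₀ : ℝ} {B : Mat2} {Ψ : ℝ → Mat2}

lemma det_eq_one (hB : IsTransfer q a B) : B.det = 1 := by
  obtain ⟨Φ, hΦ, hΦ₀, rfl⟩ := hB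
  rw [hΦ.det_eq a 0, hΦ₀, Matrix.det_one]

lemma apply (hB : IsTransfer q a B) (h : IsSolMatrix p Ψ)
    (hpq : EqOn (fun t => p (x₀ + t)) q (uIcc 0 a)) : Ψ (x₀ + a) = B * Ψ x₀ := by
  have hdet := hB.det_eq_one
  obtain ⟨Φ, hΦ, hΦ₀, rfl⟩ := hB
  have hW := hΦ.adjugate_mul_eq (h.comp_const_add x₀) hpq.symm
  rw [hΦ₀, Matrix.adjugate_one, one_mul, add_zero] at hW
  rw [hW, ← mul_assoc, Matrix.mul_adjugate, hdet, one_smul, one_mul]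

end IsTransfer

/-! ### Hyperbolic products in `SL(2, ℝ)` -/

section Hyperbolic

lemma exists_mul_eq_one_of_isCompact {M : Type*} [Monoid M] [TopologicalSpace M]
    [ContinuousMul M] [T2Space M] {Γ : Submonoid M} (hΓ : IsCompact (Γ : Set M))
    (hunit : ∀ x ∈ Γ, IsUnit x) {x : M} (hx : x ∈ Γ) : ∃ y ∈ Γ, x * y = 1 := by
  obtain ⟨_, ⟨y, hy, rfl⟩, hidem⟩ := exists_idempotent_in_compact_subsemigroup
    (fun r : M => continuous_mul_const r) ((fun y => x * y) '' Γ) ⟨_, 1, Γ.one_mem, rfl⟩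
    (hΓ.image (continuous_const_mul x)) (by
      rintro _ ⟨y, hy, rfl⟩ _ ⟨z, hz, rfl⟩
      exact ⟨y * (x * z), Γ.mul_mem hy (Γ.mul_mem hx hz), by simp only [mul_assoc]⟩)
  exact ⟨y, hy, (hunit _ (Γ.mul_mem hx hy)).mul_eq_left.1 hidem⟩

lemma isCompact_of_abs_trace_le {n : Type*} [Fintype n] [DecidableEq n]
    {Γ : Submonoid (Matrix n n ℝ)} (hclosed : IsClosed (Γ : Set (Matrix n n ℝ))) {K : ℝ}
    (htrace : ∀ X ∈ Γ, |X.trace| ≤ K) (hspan : Submodule.span ℝ (Γ : Set (Matrix n n ℝ)) = ⊤) :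
    IsCompact (Γ : Set (Matrix n n ℝ)) := by
  have hbound (C : Matrix n n ℝ) : ∃ K, ∀ X ∈ Γ, |(X * C).trace| ≤ K := by
    induction hspan ▸ Submodule.mem_top (x := C) using Submodule.span_induction with
    | mem C hC => exact ⟨K, fun X hX => htrace _ (Γ.mul_mem hX hC)⟩
    | zero => exact ⟨0, by simp⟩
    | add C D _ _ hC hD =>
      obtain ⟨⟨K, hK⟩, L, hL⟩ := hC, hD
      refine ⟨K + L, fun X hX => ?_⟩
      rw [mul_add, Matrix.trace_add]
      exact (abs_add_le _ _).trans (add_le_add (hK X hX) (hL X hX))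
    | smul c C _ hC =>
      obtain ⟨K, hK⟩ := hC
      refine ⟨|c| * K, fun X hX => ?_⟩
      rw [Matrix.mul_smul, Matrix.trace_smul, smul_eq_mul, abs_mul]
      exact mul_le_mul_of_nonneg_left (hK X hX) (abs_nonneg c)
  choose b hb using fun i j => hbound (Matrix.single j i 1)
  refine IsCompact.of_isClosed_subset
    (isCompact_univ_pi fun i => isCompact_univ_pi fun j => isCompact_Icc (a := -b i j) (b := b i j))
    hclosed fun X hX => ?_
  intro i _ j _
  rw [mem_Icc, ← abs_le]
  simpa [Matrix.trace_mul_comm X, Matrix.trace_single_mul] using hb i j X hX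

lemma det_commutator (A B : Mat2) :
    (A * B - B * A).det =
      2 * A.det * B.det - (A * B * A.adjugate * B.adjugate).trace := by
  simp only [Matrix.det_fin_two, Matrix.trace_fin_two, Matrix.adjugate_fin_two, Matrix.mul_apply,
    Fin.sum_univ_two, Matrix.sub_apply, Matrix.of_apply, Matrix.cons_val', Matrix.cons_val_zero,
    Matrix.cons_val_one, Matrix.cons_val_fin_one]
  ring

/-- Fricke's trace identity, for the determinant of the additive commutator. -/
lemma det_commutator_eq_trace (A B : Mat2) :
    (A * B - B * A).det = 4 * A.det * B.det - (A.trace ^ 2 * B.det + B.trace ^ 2 * A.det +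
      (A * B).trace ^ 2 - A.trace * B.trace * (A * B).trace) := by
  simp only [Matrix.det_fin_two, Matrix.trace_fin_two, Matrix.mul_apply, Fin.sum_univ_two,
    Matrix.sub_apply]
  ring

lemma isHyperbolic_iff_of_det_eq_one {A : Mat2} (hA : A.det = 1) :
    A.IsHyperbolic ↔ 2 < |A.trace| := by
  rw [Matrix.IsHyperbolic, Matrix.discr_fin_two, hA, mul_one, sub_pos, ← abs_two, ← sq_lt_sq]
  norm_num

/-- Completing the square: `q² det (AB - BA) = -(q α - (p - s) β / 2)² + (discr A / 4) β²`, where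
`p, q, s` are entries of `A` and `α, β` entries of `AB - BA`. -/
lemma commute_of_isElliptic {A B : Mat2} (hA : A.IsElliptic) (hdet : 0 ≤ (A * B - B * A).det) :
    Commute A B := by
  have hq : A 0 1 ≠ 0 := hA.b_ne_zero
  rw [Matrix.IsElliptic, Matrix.discr_fin_two] at hA
  set D := A * B - B * A with hD
  have htrace : D 1 1 = -D 0 0 := by
    simp only [hD, Matrix.sub_apply, Matrix.mul_apply, Fin.sum_univ_two]; ring
  have horth : (A 0 0 - A 1 1) * D 0 0 + A 0 1 * D 1 0 + A 1 0 * D 0 1 = 0 := by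
    simp only [hD, Matrix.sub_apply, Matrix.mul_apply, Fin.sum_univ_two]; ring
  have hsquare : A 0 1 ^ 2 * D.det = -(A 0 1 * D 0 0 - (A 0 0 - A 1 1) * D 0 1 / 2) ^ 2 +
      (A.trace ^ 2 - 4 * A.det) / 4 * D 0 1 ^ 2 := by
    rw [Matrix.det_fin_two, Matrix.det_fin_two, Matrix.trace_fin_two, htrace]
    linear_combination -A 0 1 * D 0 1 * horth
  have hnonneg : 0 ≤ A 0 1 ^ 2 * D.det := by positivity
  have h01 : D 0 1 = 0 := by
    by_contra hne
    nlinarith [sq_nonneg (A 0 1 * D 0 0 - (A 0 0 - A 1 1) * D 0 1 / 2), sq_pos_of_ne_zero hne]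
  rw [h01] at hsquare horth
  have h00 : D 0 0 = 0 := by
    refine (mul_eq_zero.1 (pow_eq_zero_iff two_ne_zero |>.1 ?_)).resolve_left hq
    nlinarith [sq_nonneg (A 0 1 * D 0 0)]
  have h10 : D 1 0 = 0 := by simpa [h00, hq] using horth
  refine sub_eq_zero.1 (?_ : D = 0)
  ext i j
  fin_cases i <;> fin_cases j <;> simp [h00, h01, h10, htrace]

variable {S : Set Mat2}

lemma not_isElliptic_of_forall_commute (hspan : Submodule.span ℝ S = ⊤) {A : Mat2}
    (hA : ∀ B ∈ S, Commute A B) : ¬A.IsElliptic := fun hell => by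
  have hcenter : LinearMap.mulLeft ℝ A = LinearMap.mulRight ℝ A := LinearMap.ext_on hspan hA
  have h01 := congrFun₂ (DFunLike.congr_fun hcenter (Matrix.single 1 1 1)) 0 1
  exact hell.b_ne_zero (by simpa using h01)

lemma eq_smul_one_of_trace_mul_eq (hspan : Submodule.span ℝ S = ⊤) {A : Mat2} {c : ℝ}
    (hA : ∀ B ∈ S, (A * B).trace = c * B.trace) : A = c • (1 : Mat2) := by
  have htrace : Matrix.traceLinearMap (Fin 2) ℝ ℝ ∘ₗ LinearMap.mulLeft ℝ A =
      c • Matrix.traceLinearMap (Fin 2) ℝ ℝ := LinearMap.ext_on hspan hA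
  refine Matrix.ext_iff_trace_mul_right.2 fun X => ?_
  simpa using DFunLike.congr_fun htrace X

lemma exists_forall_ne_smul_one (hspan : Submodule.span ℝ S = ⊤) :
    ∃ A ∈ S, ∀ c : ℝ, A ≠ c • (1 : Mat2) := by
  by_contra! hscalar
  have h01 : Matrix.entryLinearMap ℝ ℝ (0 : Fin 2) (1 : Fin 2) = 0 :=
    LinearMap.ext_on hspan fun A hA => by
      obtain ⟨c, rfl⟩ := hscalar A hA
      simp
  simpa using DFunLike.congr_fun h01 (Matrix.single 0 1 1)

lemma trace_mul_eq_of_discr_eq_zero {A B : Mat2} (hA : A.det = 1) (hB : B.det = 1)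
    (hdiscr : A.discr = 0) (hcomm : 0 ≤ (A * B - B * A).det) :
    (A * B).trace = A.trace / 2 * B.trace := by
  rw [det_commutator_eq_trace, hA, hB] at hcomm
  rw [Matrix.discr_fin_two, hA] at hdiscr
  have hsq : ((A * B).trace - A.trace / 2 * B.trace) ^ 2 ≤ 0 := by
    nlinarith
  exact sub_eq_zero.1 (pow_eq_zero_iff two_ne_zero |>.1 (le_antisymm hsq (sq_nonneg _)))

variable {Γ : Submonoid Mat2}

lemma adjugate_mem_of_isCompact (hΓ : IsCompact (Γ : Set Mat2)) (hdet : ∀ A ∈ Γ, A.det = 1)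
    {A : Mat2} (hA : A ∈ Γ) : A.adjugate ∈ Γ := by
  obtain ⟨B, hB, hAB⟩ := exists_mul_eq_one_of_isCompact hΓ
    (fun X hX => (Matrix.isUnit_iff_isUnit_det X).2 (by simp [hdet X hX])) hA
  have hadj : A.adjugate = B :=
    left_inv_eq_right_inv (by rw [Matrix.adjugate_mul, hdet A hA, one_smul]) hAB
  rwa [hadj]

lemma det_commutator_nonneg (hΓ : IsCompact (Γ : Set Mat2)) (hdet : ∀ A ∈ Γ, A.det = 1)
    (htrace : ∀ A ∈ Γ, |A.trace| ≤ 2) {A B : Mat2} (hA : A ∈ Γ) (hB : B ∈ Γ) :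
    0 ≤ (A * B - B * A).det := by
  have hmem : A * B * A.adjugate * B.adjugate ∈ Γ :=
    Γ.mul_mem (Γ.mul_mem (Γ.mul_mem hA hB) (adjugate_mem_of_isCompact hΓ hdet hA))
      (adjugate_mem_of_isCompact hΓ hdet hB)
  rw [det_commutator, hdet A hA, hdet B hB]
  linarith [(abs_le.1 (htrace _ hmem)).2]

/-- A closed spanning submonoid without hyperbolic elements is a compact group, so that
`tr (A B A⁻¹ B⁻¹) ≤ 2` on it. Hence its elliptic elements are central, and those of trace `±2`
are scalar. -/
lemma exists_isHyperbolic_of_isClosed (hclosed : IsClosed (Γ : Set Mat2))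
    (hdet : ∀ A ∈ Γ, A.det = 1) (hspan : Submodule.span ℝ (Γ : Set Mat2) = ⊤) :
    ∃ A ∈ Γ, A.IsHyperbolic := by
  by_contra! hnot
  have htrace : ∀ A ∈ Γ, |A.trace| ≤ 2 := fun A hA =>
    not_lt.1 ((isHyperbolic_iff_of_det_eq_one (hdet A hA)).not.1 (hnot A hA))
  have hcomm {A B : Mat2} (hA : A ∈ Γ) (hB : B ∈ Γ) : 0 ≤ (A * B - B * A).det :=
    det_commutator_nonneg (isCompact_of_abs_trace_le hclosed htrace hspan) hdet htrace hA hB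
  have hdiscr : ∀ A ∈ Γ, A.discr = 0 := fun A hA => by
    refine le_antisymm (not_lt.1 (hnot A hA)) (not_lt.1 fun hell => ?_)
    exact not_isElliptic_of_forall_commute hspan
      (fun B hB => commute_of_isElliptic hell (hcomm hA hB)) hell
  obtain ⟨A, hA, hscalar⟩ := exists_forall_ne_smul_one hspan
  exact hscalar _ <| eq_smul_one_of_trace_mul_eq hspan fun B hB =>
    trace_mul_eq_of_discr_eq_zero (hdet A hA) (hdet B hB) (hdiscr A hA) (hcomm hA hB)

theorem exists_isHyperbolic_of_span_eq_top (hdet : ∀ A ∈ S, A.det = 1)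
    (hspan : Submodule.span ℝ S = ⊤) : ∃ A ∈ Submonoid.closure S, A.IsHyperbolic := by
  by_contra! hnot
  let Γ := (Submonoid.closure S).topologicalClosure
  have hdetΓ : ∀ A ∈ Γ, A.det = 1 := by
    have hle : Submonoid.closure S ≤ MonoidHom.mker (Matrix.detMonoidHom (n := Fin 2) (R := ℝ)) :=
      Submonoid.closure_le.2 hdet
    exact fun A hA => closure_minimal (t := {A : Mat2 | A.det = 1}) hle
      (isClosed_eq continuous_id.matrix_det continuous_const) hA
  have hspanΓ : Submodule.span ℝ (Γ : Set Mat2) = ⊤ := top_unique <| hspan.ge.trans <|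
    Submodule.span_mono (Submonoid.subset_closure.trans (Submonoid.le_topologicalClosure _))
  have hclosed : IsClosed {A : Mat2 | ¬A.IsHyperbolic} := by
    simp only [Matrix.IsHyperbolic, Matrix.discr_fin_two, not_lt]
    exact isClosed_le (by fun_prop) continuous_const
  obtain ⟨A, hA, hhyp⟩ := exists_isHyperbolic_of_isClosed
    (Submonoid.isClosed_topologicalClosure _) hdetΓ hspanΓ
  exact closure_minimal hnot hclosed hA hhyp

end Hyperbolic

/-! ### Spanning by powers, and diagonalization -/

section Transvection

open Filter Matrix
open scoped Topology Matrix.Norms.Operator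

lemma mem_of_eventually_mem_of_analyticOnNhd {E : Type*} [NormedAddCommGroup E] [NormedSpace ℝ E]
    [FiniteDimensional ℝ E] (W : Submodule ℝ E) {γ : ℝ → E} (hγ : AnalyticOnNhd ℝ γ univ)
    (hW : ∀ᶠ δ in 𝓝 0, γ δ ∈ W) (δ : ℝ) : γ δ ∈ W := by
  by_contra hδ
  obtain ⟨f, hf, hWf⟩ := W.exists_le_ker_of_notMem hδ
  have hfγ : AnalyticOnNhd ℝ (fun δ => f.toContinuousLinearMap (γ δ)) univ := fun δ hδ =>
    (f.toContinuousLinearMap.analyticAt _).comp (hγ δ hδ)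
  exact hf <| congrFun (hfγ.eq_of_eventuallyEq (g := fun _ => 0) (fun _ _ => analyticAt_const)
    (hW.mono fun δ hδ => hWf hδ)) δ

lemma transvection_induction {K : Type*} [Field K] {P : Matrix (Fin 2) (Fin 2) K → Prop}
    {M : Matrix (Fin 2) (Fin 2) K} (hM : M.det = 1) (one : P 1)
    (transvection_mul : ∀ i j, i ≠ j → ∀ δ M, P M → P (transvection i j δ * M)) : P M := by
  have hU (δ) (M) : P M → P (transvection 0 1 δ * M) := transvection_mul 0 1 (by decide) δ M
  have hL (δ) (M) : P M → P (transvection 1 0 δ * M) := transvection_mul 1 0 (by decide) δ M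
  have hne (M : Matrix (Fin 2) (Fin 2) K) (hM : M.det = 1) (h10 : M 1 0 ≠ 0) : P M := by
    have hprod : M = transvection 0 1 ((M 0 0 - 1) / M 1 0) * (transvection 1 0 (M 1 0) *
        (transvection 0 1 ((M 1 1 - 1) / M 1 0) * 1)) := by
      rw [det_fin_two] at hM
      ext i j
      fin_cases i <;> fin_cases j <;>
        simp [transvection, Matrix.mul_apply, Matrix.add_apply, Fin.sum_univ_two, single_apply,
          one_apply] <;> grind
    rw [hprod]
    exact hU _ _ (hL _ _ (hU _ _ one))
  by_cases h10 : M 1 0 = 0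
  · have h00 : M 0 0 ≠ 0 := fun h00 => by simp [det_fin_two, h00, h10] at hM
    have hprod : M = transvection 1 0 (-1) * (transvection 1 0 1 * M) := by
      rw [← mul_assoc, transvection_mul_transvection_same _ _ (by decide), neg_add_cancel,
        transvection_zero, one_mul]
    rw [hprod]
    refine hL _ _ (hne _ ?_ ?_)
    · rw [det_mul, hM, det_transvection_of_ne _ _ (by decide), one_mul]
    · simpa [transvection, add_mul, h10] using h00
  · exact hne M hM h10

lemma exists_transvection_eq_pow {i j : Fin 2} (hij : i ≠ j) (δ : ℝ) {n : ℕ} (hn : 0 < n) :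
    ∃ M : Mat2, M.det = 1 ∧ M ^ n = transvection i j δ := by
  have hpow (c : ℝ) (k : ℕ) : transvection i j c ^ k = transvection i j (k * c) := by
    induction k with
    | zero => simp
    | succ k ih =>
      rw [pow_succ, ih, transvection_mul_transvection_same _ _ hij]
      push_cast
      rw [add_one_mul]
  refine ⟨transvection i j (δ / n), det_transvection_of_ne _ _ hij _, ?_⟩
  rw [hpow, mul_div_cancel₀ _ (by positivity)]

lemma exists_diagonal_eq_pow {d : ℝ} (hd : 0 < d) {n : ℕ} (hn : 0 < n) :
    ∃ M : Mat2, M.det = 1 ∧ M ^ n = diagonal ![d, d⁻¹] := by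
  have hr : d ^ (n : ℝ)⁻¹ ≠ 0 := (Real.rpow_pos_of_pos hd _).ne'
  refine ⟨diagonal ![d ^ (n : ℝ)⁻¹, (d ^ (n : ℝ)⁻¹)⁻¹], by simp [hr], ?_⟩
  rw [diagonal_pow]
  congr 1
  ext i
  fin_cases i <;> simp [Real.rpow_inv_natCast_pow hd.le hn.ne']

lemma span_pow_eq_top_of_det_eq_one {n : ℕ} (hn : 0 < n) :
    Submodule.span ℝ ((· ^ n) '' {M : Mat2 | M.det = 1}) = ⊤ := by
  set W := Submodule.span ℝ ((· ^ n) '' {M : Mat2 | M.det = 1})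
  have hmem {X : Mat2} : (∃ M : Mat2, M.det = 1 ∧ M ^ n = X) → X ∈ W :=
    fun ⟨M, hM, h⟩ => Submodule.subset_span ⟨M, hM, h⟩
  have h1 : (1 : Mat2) ∈ W := hmem ⟨1, det_one, one_pow n⟩
  have h01 := hmem (exists_transvection_eq_pow (i := 0) (j := 1) (by decide) 1 hn)
  have h10 := hmem (exists_transvection_eq_pow (i := 1) (j := 0) (by decide) 1 hn)
  have hd := hmem (exists_diagonal_eq_pow zero_lt_two hn)
  refine Submodule.eq_top_iff'.2 fun C => ?_
  let β := (C 0 0 - C 1 1) * (2 / 3)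
  have hC : C = (C 0 0 - 2 * β - C 0 1 - C 1 0) • (1 : Mat2) + β • diagonal ![2, 2⁻¹] +
      C 0 1 • transvection 0 1 1 + C 1 0 • transvection 1 0 1 := by
    ext i j
    fin_cases i <;> fin_cases j <;> simp [transvection, β] <;> ring
  rw [hC]
  exact W.add_mem (W.add_mem (W.add_mem (W.smul_mem _ h1) (W.smul_mem _ hd)) (W.smul_mem _ h01))
    (W.smul_mem _ h10)

theorem span_pow_eq_top {Ω : Set Mat2} (hne : Ω.Nonempty) (hdet : ∀ X ∈ Ω, X.det = 1)
    (hstable : ∀ X ∈ Ω, ∀ i j, i ≠ j → ∀ᶠ δ in 𝓝 0, X * transvection i j δ ∈ Ω) {n : ℕ}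
    (hn : 0 < n) : Submodule.span ℝ ((· ^ n) '' Ω) = ⊤ := by
  set W := Submodule.span ℝ ((· ^ n) '' Ω)
  have hright {M : Mat2} (hM : M.det = 1) : ∀ X ∈ Ω, (X * M) ^ n ∈ W := by
    refine transvection_induction (P := fun M => ∀ X ∈ Ω, (X * M) ^ n ∈ W) hM
      (fun X hX => Submodule.subset_span ⟨X, hX, by rw [mul_one]⟩) ?_
    · intro i j hij δ M ih X hX
      refine mem_of_eventually_mem_of_analyticOnNhd W
        (γ := fun δ => (X * (transvection i j δ * M)) ^ n) ?_
        ((hstable X hX i j hij).mono fun δ hδ => ?_) δ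
      · have hsingle (δ : ℝ) : AnalyticAt ℝ (single i j : ℝ → Mat2) δ :=
          (singleLinearMap ℝ i j).toContinuousLinearMap.analyticAt δ
        exact fun δ _ => (analyticAt_const.mul
          ((analyticAt_const.add (hsingle δ)).mul analyticAt_const)).pow n
      · simpa only [mul_assoc] using ih _ hδ
  obtain ⟨B, hB⟩ := hne
  refine top_unique <| (span_pow_eq_top_of_det_eq_one hn).ge.trans <| Submodule.span_le.2 ?_
  rintro _ ⟨M, hM : M.det = 1, rfl⟩
  have hfactor : B * (B.adjugate * M) = M := by
    rw [← mul_assoc, mul_adjugate, hdet B hB, one_smul, one_mul]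
  simpa only [hfactor, SetLike.mem_coe] using
    hright (M := B.adjugate * M) (by rw [det_mul, det_adjugate, hdet B hB, hM]; simp) B hB

end Transvection

section Diagonalization

variable {M : Mat2}

lemma exists_root_of_isHyperbolic (hdet : M.det = 1) (hM : M.IsHyperbolic) :
    ∃ μ : ℝ, μ ≠ 0 ∧ |μ| < 1 ∧ M.trace = μ + μ⁻¹ := by
  obtain ⟨μ, hμ⟩ := exists_quadratic_eq_zero (a := (1 : ℝ)) (b := -M.trace) (c := 1) one_ne_zero
    ⟨√M.discr, by rw [Real.mul_self_sqrt hM.le, discrim, Matrix.discr_fin_two, hdet]; ring⟩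
  have hμ₀ : μ ≠ 0 := by rintro rfl; simp at hμ
  have htrace : M.trace = μ + μ⁻¹ := by field_simp; linarith
  rcases lt_trichotomy |μ| 1 with hlt | heq | hgt
  · exact ⟨μ, hμ₀, hlt, htrace⟩
  · have hle := abs_add_le μ μ⁻¹
    rw [abs_inv, heq, ← htrace] at hle
    have := (isHyperbolic_iff_of_det_eq_one hdet).1 hM
    norm_num at hle
    linarith
  · exact ⟨μ⁻¹, inv_ne_zero hμ₀, by rw [abs_inv]; exact inv_lt_one_of_one_lt₀ hgt,
      by rw [inv_inv, htrace, add_comm]⟩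

lemma hasEigenvalue_of_trace_eq (hdet : M.det = 1) {μ : ℝ} (hμ : μ ≠ 0)
    (htrace : M.trace = μ + μ⁻¹) : Module.End.HasEigenvalue M.toLin' μ := by
  rw [Module.End.hasEigenvalue_iff_isRoot_charpoly, Matrix.charpoly_toLin', Matrix.charpoly_fin_two,
    htrace, hdet]
  simp only [Polynomial.IsRoot, Polynomial.eval_add, Polynomial.eval_sub, Polynomial.eval_pow,
    Polynomial.eval_mul, Polynomial.eval_X, Polynomial.eval_C]
  field_simp
  ring

theorem exists_diagonalization (hdet : M.det = 1) (hM : M.IsHyperbolic) :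
    ∃ (P : Mat2) (μ : ℝ), P.det = 1 ∧ μ ≠ 0 ∧ |μ| < 1 ∧
      M * P = P * Matrix.diagonal ![μ, μ⁻¹] := by
  obtain ⟨μ, hμ₀, hμ, htrace⟩ := exists_root_of_isHyperbolic hdet hM
  let d : Fin 2 → ℝ := ![μ, μ⁻¹]
  have hd : Function.Injective d := List.nodup_ofFn.1 <| by
    have hne : μ ≠ μ⁻¹ := fun h => hμ.not_ge <| by
      rw [h, abs_inv]
      exact (one_lt_inv₀ (abs_pos.2 hμ₀)).2 hμ |>.le
    simpa [d] using hne
  have heig (j : Fin 2) : ∃ v, Module.End.HasEigenvector M.toLin' (d j) v := by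
    refine (hasEigenvalue_of_trace_eq hdet ?_ ?_).exists_hasEigenvector <;>
      fin_cases j <;> simp [d, hμ₀, htrace, add_comm]
  choose v hv using heig
  let Q : Mat2 := (Matrix.of v).transpose
  have hMQ : M * Q = Q * Matrix.diagonal d := by
    ext i j
    rw [Matrix.mul_diagonal, mul_comm]
    exact congrFun (hv j).apply_eq_smul i
  have hQ : Q.det ≠ 0 := isUnit_iff_ne_zero.1 <| (Matrix.isUnit_iff_isUnit_det Q).1 <|
    Matrix.linearIndependent_cols_iff_isUnit.1 <|
      Module.End.eigenvectors_linearIndependent' M.toLin' d hd v hv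
  refine ⟨Q * Matrix.diagonal ![1, Q.det⁻¹], μ, by simp [hQ], hμ₀, hμ, ?_⟩
  rw [← mul_assoc, hMQ, mul_assoc, mul_assoc, (Matrix.commute_diagonal _ _).eq]

end Diagonalization

/-! ### Smooth blocks in `L²` -/

open scoped Distributions

section TestFunctions

variable (U : TopologicalSpace.Opens ℝ) (μ : Measure ℝ) [IsFiniteMeasureOnCompacts μ]

theorem memLp_testFunction {U : TopologicalSpace.Opens ℝ} (φ : 𝓓(U, ℝ)) : MemLp φ 2 μ :=
  φ.continuous.memLp_of_hasCompactSupport φ.hasCompactSupport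

/-- The class of a test function in `L²(μ)`. -/
def testToL2 : 𝓓(U, ℝ) →ₗ[ℝ] Lp ℝ 2 μ where
  toFun φ := (memLp_testFunction μ φ).toLp φ
  map_add' _ _ := MemLp.toLp_add _ _
  map_smul' c _ := MemLp.toLp_const_smul c _

variable {U μ}

theorem coeFn_testToL2 (φ : 𝓓(U, ℝ)) : testToL2 U μ φ =ᵐ[μ] φ :=
  (memLp_testFunction μ φ).coeFn_toLp

theorem inner_testToL2 (g : Lp ℝ 2 μ) (φ : 𝓓(U, ℝ)) :
    inner ℝ g (testToL2 U μ φ) = ∫ x, g x * φ x ∂μ := by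
  rw [L2.inner_def]
  apply integral_congr_ae
  filter_upwards [coeFn_testToL2 φ] with x hx
  simp [hx, mul_comm]

end TestFunctions

theorem denseRange_of_forall_inner_eq_zero {V H : Type*} [AddCommGroup V] [Module ℝ V]
    [NormedAddCommGroup H] [InnerProductSpace ℝ H] [CompleteSpace H] (T : V →ₗ[ℝ] H)
    (h : ∀ g : H, (∀ v, inner ℝ g (T v) = 0) → g = 0) : DenseRange T := by
  rw [DenseRange, ← LinearMap.coe_range, Submodule.dense_iff_topologicalClosure_eq_top,
    Submodule.topologicalClosure_eq_top_iff, Submodule.eq_bot_iff]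
  exact fun g hg => h g fun v => (Submodule.mem_orthogonal' _ _).1 hg _ ⟨v, rfl⟩

theorem denseRange_testToL2 {U : TopologicalSpace.Opens ℝ} {μ : Measure ℝ}
    [IsFiniteMeasureOnCompacts μ] (hU : ∀ᵐ x ∂μ, x ∈ U) : DenseRange (testToL2 U μ) := by
  refine denseRange_of_forall_inner_eq_zero _ fun g hg => ?_
  have hloc : LocallyIntegrable g μ := (Lp.memLp g).locallyIntegrable (by norm_num)
  have hgU := U.isOpen.ae_eq_zero_of_integral_contDiff_smul_eq_zero (hloc.locallyIntegrableOn _)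
    fun φ hφ hc hs => by
      simpa only [inner_testToL2, TestFunction.coe_mk, mul_comm, smul_eq_mul] using
        hg (⟨φ, hφ, hc, hs⟩ : 𝓓(U, ℝ))
  rw [Lp.eq_zero_iff_ae_eq_zero]
  filter_upwards [hU, hgU] with x hxU hx using hx hxU

/-- Smooth potentials on `[0, a)` supported away from the end points. They are dense in
`L²([0, a))`, and any sequence of them concatenates to a smooth function on the line. -/
abbrev SmoothBlock (a : ℝ) := 𝓓((⟨Ioo 0 a, isOpen_Ioo⟩ : TopologicalSpace.Opens ℝ), ℝ)

/-- The class of a smooth block in `L²([0, a))`. -/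
def SmoothBlock.toL2 {a : ℝ} : SmoothBlock a →ₗ[ℝ] L2I a := testToL2 _ _

theorem SmoothBlock.denseRange_toL2 (a : ℝ) : DenseRange (SmoothBlock.toL2 (a := a)) := by
  refine denseRange_testToL2 ((ae_restrict_iff' measurableSet_Ico).2 ?_)
  filter_upwards [Measure.ae_ne volume (0 : ℝ)] with x hx hxa
  exact ⟨hxa.1.lt_of_ne' hx, hxa.2⟩

theorem SmoothBlock.apply_eq_zero {a x : ℝ} (ψ : SmoothBlock a) (hx : x ∉ Ioo 0 a) : ψ x = 0 :=
  image_eq_zero_of_notMem_tsupport fun h => hx (ψ.tsupport_subset h)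

theorem SmoothBlock.dist_toL2_le {a ε : ℝ} (ha : 0 ≤ a) (hε : 0 ≤ ε) {φ ψ : SmoothBlock a}
    (h : ∀ x, |φ x - ψ x| ≤ ε) : dist (toL2 φ) (toL2 ψ) ≤ √a * ε := by
  rw [dist_eq_norm, ← map_sub]
  refine (Lp.norm_le_of_ae_bound hε ?_).trans_eq ?_
  · filter_upwards [coeFn_testToL2 (φ - ψ)] with x hx
    rw [toL2, hx]
    exact h x
  · simp [measureUnivNNReal, Real.sqrt_eq_rpow, Real.coe_toNNReal a ha, ENNReal.ofReal]

/-! ### Shearing a transfer matrix by a local change of the potential -/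

open Filter Topology

theorem contDiffAt_uncurry_deriv {f : ℝ → ℝ → ℝ} {p : ℝ × ℝ}
    (hf : ContDiffAt ℝ (⊤ : ℕ∞) (Function.uncurry f) p) :
    ContDiffAt ℝ (⊤ : ℕ∞) (Function.uncurry fun δ => deriv (f δ)) p := by
  have hf' : ContDiffAt ℝ (⊤ : ℕ∞) (Function.uncurry fun p : ℝ × ℝ => f p.1) (p, p.2) :=
    hf.comp (p, p.2) (f := fun r : (ℝ × ℝ) × ℝ => (r.1.1, r.2)) (by fun_prop)
  exact (hf'.fderiv contDiffAt_snd (by simp)).clm_apply contDiffAt_const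

/-- The potential `q` such that `f'' = q f` and `g'' = q g`, for functions `f` and `g` of constant
Wronskian `f g' - f' g = ω`. -/
def hillPotential (ω : ℝ) (f g : ℝ → ℝ) (x : ℝ) : ℝ :=
  (deriv (deriv f) x * deriv g x - deriv f x * deriv (deriv g) x) / ω

section HillPotential

variable {ω : ℝ} {f g q u u' v v' : ℝ → ℝ} {x : ℝ}

theorem hillPotential_swap : hillPotential (-ω) g f = hillPotential ω f g := by
  ext x
  simp only [hillPotential, div_neg, ← neg_div]
  ring

theorem contDiff_hillPotential (hf : ContDiff ℝ (⊤ : ℕ∞) f) (hg : ContDiff ℝ (⊤ : ℕ∞) g) :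
    ContDiff ℝ (⊤ : ℕ∞) (hillPotential ω f g) :=
  ((hf.iterate_deriv 2).mul (hg.iterate_deriv 1)).sub
    ((hf.iterate_deriv 1).mul (hg.iterate_deriv 2)) |>.div_const ω

theorem isSol_hillPotential (hω : ω ≠ 0) (hf : ContDiff ℝ (⊤ : ℕ∞) f)
    (hg : ContDiff ℝ (⊤ : ℕ∞) g) (hW : ∀ x, f x * deriv g x - deriv f x * g x = ω) :
    IsSol (hillPotential ω f g) f (deriv f) := by
  have hdf x := (hf.differentiable (by simp) x).hasDerivAt
  have hdg x := (hg.differentiable (by simp) x).hasDerivAt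
  have hdf' x := ((hf.iterate_deriv 1).differentiable (by simp) x).hasDerivAt
  have hdg' x := ((hg.iterate_deriv 1).differentiable (by simp) x).hasDerivAt
  refine ⟨hdf, fun x => (hdf' x).congr_deriv ?_⟩
  have hconst : f x * deriv (deriv g) x = deriv (deriv f) x * g x := by
    have h := (((hdf x).mul (hdg' x)).sub ((hdf' x).mul (hdg x))).unique
      ((hasDerivAt_const x ω).congr_of_eventuallyEq (.of_forall hW))
    simp only [Function.iterate_one] at h
    linarith
  simp only [Function.iterate_one, hillPotential]
  field_simp
  linear_combination deriv f x * hconst - deriv (deriv f) x * hW x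

theorem IsSol.hillPotential_eq (hu : IsSol q u u') (hv : IsSol q v v') (hω : ω ≠ 0)
    (hW : u x * v' x - u' x * v x = ω) (hf : f =ᶠ[𝓝 x] u) (hg : g =ᶠ[𝓝 x] v) :
    hillPotential ω f g x = q x := by
  have hdu : deriv u = u' := funext fun y => (hu.hasDerivAt y).deriv
  have hdv : deriv v = v' := funext fun y => (hv.hasDerivAt y).deriv
  rw [hillPotential, hf.deriv.deriv_eq, hg.deriv.deriv_eq, hf.deriv_eq, hg.deriv_eq, hdu, hdv,
    (hu.hasDerivAt' x).deriv, (hv.hasDerivAt' x).deriv, div_eq_iff hω, ← hW]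
  ring

theorem continuousAt_uncurry_hillPotential {f g : ℝ → ℝ → ℝ} {p : ℝ × ℝ}
    (hf : ContDiffAt ℝ (⊤ : ℕ∞) (Function.uncurry f) p)
    (hg : ContDiffAt ℝ (⊤ : ℕ∞) (Function.uncurry g) p) :
    ContinuousAt (fun r : ℝ × ℝ => hillPotential ω (f r.1) (g r.1) r.2) p := by
  have hf' := contDiffAt_uncurry_deriv hf
  have hg' := contDiffAt_uncurry_deriv hg
  exact (((contDiffAt_uncurry_deriv hf').continuousAt.mul hg'.continuousAt).sub
    (hf'.continuousAt.mul (contDiffAt_uncurry_deriv hg').continuousAt)).div_const ω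

end HillPotential

theorem exists_smooth_step {s t : ℝ} (hst : s < t) :
    ∃ η : ℝ → ℝ, ContDiff ℝ (⊤ : ℕ∞) η ∧ (∀ x ≤ s, η x = 0) ∧ ∀ x ≥ t, η x = 1 := by
  refine ⟨fun x => Real.smoothTransition ((x - s) / (t - s)),
    Real.smoothTransition.contDiff.comp (by fun_prop), fun x hx => ?_, fun x hx => ?_⟩
  · exact Real.smoothTransition.zero_of_nonpos
      (div_nonpos_of_nonpos_of_nonneg (by linarith) (by linarith))
  · refine Real.smoothTransition.one_of_one_le ?_
    rw [le_div_iff₀ (by linarith)]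
    linarith

section Shear

variable (ω : ℝ) (η u v : ℝ → ℝ) (δ x : ℝ)

/-- The factor making the Wronskian of `shearFst` and `shearSnd` equal to that of `u` and `v`,
which is `ω`. -/
def shearFactor : ℝ := (√(1 + δ / ω * (deriv η x * u x ^ 2)))⁻¹

/-- First member of the pair deforming `(u, v)` where `η = 0` into `(u, v + δ u)` where `η = 1`. -/
def shearFst : ℝ := shearFactor ω η u δ x * u x

/-- Second member of the pair deforming `(u, v)` where `η = 0` into `(u, v + δ u)` where `η = 1`. -/
def shearSnd : ℝ := shearFactor ω η u δ x * (v x + δ * η x * u x)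

variable {ω η u v δ x} {c ε s t : ℝ} {q u' v' : ℝ → ℝ}

theorem contDiffAt_shearFactor (hη : ContDiff ℝ (⊤ : ℕ∞) η) (hu : ContDiff ℝ (⊤ : ℕ∞) u)
    (hpos : 0 < 1 + δ / ω * (deriv η x * u x ^ 2)) :
    ContDiffAt ℝ (⊤ : ℕ∞) (Function.uncurry (shearFactor ω η u)) (δ, x) := by
  have : ContDiff ℝ (⊤ : ℕ∞) (deriv η) := hη.iterate_deriv 1
  refine ContDiffAt.inv (ContDiffAt.sqrt (ContDiff.contDiffAt ?_) hpos.ne')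
    (Real.sqrt_pos.2 hpos).ne'
  fun_prop

theorem contDiffAt_shearFst (hη : ContDiff ℝ (⊤ : ℕ∞) η) (hu : ContDiff ℝ (⊤ : ℕ∞) u)
    (hpos : 0 < 1 + δ / ω * (deriv η x * u x ^ 2)) :
    ContDiffAt ℝ (⊤ : ℕ∞) (Function.uncurry (shearFst ω η u)) (δ, x) :=
  (contDiffAt_shearFactor hη hu hpos).mul (hu.comp contDiff_snd).contDiffAt

theorem contDiffAt_shearSnd (hη : ContDiff ℝ (⊤ : ℕ∞) η) (hu : ContDiff ℝ (⊤ : ℕ∞) u)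
    (hpos : 0 < 1 + δ / ω * (deriv η x * u x ^ 2)) (hv : ContDiff ℝ (⊤ : ℕ∞) v) :
    ContDiffAt ℝ (⊤ : ℕ∞) (Function.uncurry (shearSnd ω η u v)) (δ, x) := by
  refine (contDiffAt_shearFactor hη hu hpos).mul (ContDiff.contDiffAt ?_)
  fun_prop

theorem shear_wronskian_eq (hη : ContDiff ℝ (⊤ : ℕ∞) η) (hu : IsSol q u u') (hv : IsSol q v v')
    (hq : ContDiff ℝ (⊤ : ℕ∞) q) (hω : ω ≠ 0) (hW : u x * v' x - u' x * v x = ω)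
    (hpos : 0 < 1 + δ / ω * (deriv η x * u x ^ 2)) :
    shearFst ω η u δ x * deriv (shearSnd ω η u v δ) x -
      deriv (shearFst ω η u δ) x * shearSnd ω η u v δ x = ω := by
  have hg : HasDerivAt (shearFactor ω η u δ) (deriv (shearFactor ω η u δ) x) x :=
    ((contDiffAt_shearFactor hη (hu.contDiff hq) hpos).comp x
      (contDiffAt_const.prodMk contDiffAt_id)).differentiableAt (by simp) |>.hasDerivAt
  have hη' := (hη.differentiable (by simp) x).hasDerivAt
  have hfst : HasDerivAt (shearFst ω η u δ) _ x := hg.mul (hu.hasDerivAt x)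
  have hsnd : HasDerivAt (shearSnd ω η u v δ) _ x :=
    hg.mul ((hv.hasDerivAt x).add ((hη'.const_mul δ).mul (hu.hasDerivAt x)))
  have hsq : shearFactor ω η u δ x ^ 2 * (1 + δ / ω * (deriv η x * u x ^ 2)) = 1 := by
    rw [shearFactor, inv_pow, Real.sq_sqrt hpos.le, inv_mul_cancel₀ hpos.ne']
  rw [hfst.deriv, hsnd.deriv, shearFst, shearSnd]
  field_simp at hsq
  linear_combination hsq + shearFactor ω η u δ x ^ 2 * hW

theorem shearFactor_eventuallyEq_one (hη : η =ᶠ[𝓝 x] fun _ => c) :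
    shearFactor ω η u δ =ᶠ[𝓝 x] 1 := by
  filter_upwards [hη.deriv] with y hy
  simp [shearFactor, hy]

theorem shearFst_eventuallyEq (hη : η =ᶠ[𝓝 x] fun _ => c) : shearFst ω η u δ =ᶠ[𝓝 x] u := by
  filter_upwards [shearFactor_eventuallyEq_one (ω := ω) (u := u) (δ := δ) hη] with y hy
  simp [shearFst, hy]

theorem shearSnd_eventuallyEq (hη : η =ᶠ[𝓝 x] fun _ => c) :
    shearSnd ω η u v δ =ᶠ[𝓝 x] fun y => u y * (δ * c) + v y * 1 := by
  filter_upwards [shearFactor_eventuallyEq_one (ω := ω) (u := u) (δ := δ) hη,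
    hη] with y hy hyc
  simp only [shearSnd, hy, hyc, Pi.one_apply]
  ring

theorem eventually_shear_radicand_pos (hη : ContDiff ℝ (⊤ : ℕ∞) η) (hu : Continuous u)
    (hηc : ∀ x ∉ Icc s t, ∃ c, η =ᶠ[𝓝 x] fun _ => c) :
    ∀ᶠ δ in 𝓝 0, ∀ x, 0 < 1 + δ / ω * (deriv η x * u x ^ 2) := by
  have hη' : Continuous (deriv η) := (hη.iterate_deriv 1).continuous
  have hcont : Continuous fun p : ℝ × ℝ => 1 + p.1 / ω * (deriv η p.2 * u p.2 ^ 2) := by fun_prop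
  have hIcc : ∀ᶠ δ in 𝓝 0, ∀ x ∈ Icc s t, 0 < 1 + δ / ω * (deriv η x * u x ^ 2) :=
    isCompact_Icc.eventually_forall_of_forall_eventually fun x _ =>
      hcont.continuousAt.eventually (lt_mem_nhds (by simp))
  filter_upwards [hIcc] with δ hδ x
  by_cases hx : x ∈ Icc s t
  · exact hδ x hx
  · obtain ⟨c, hc⟩ := hηc x hx
    simp [hc.deriv_eq]

theorem eventually_abs_shear_hillPotential_sub_lt (hη : ContDiff ℝ (⊤ : ℕ∞) η)
    (hu : IsSol q u u') (hv : IsSol q v v') (hq : ContDiff ℝ (⊤ : ℕ∞) q) (hω : ω ≠ 0)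
    (hW : ∀ x, u x * v' x - u' x * v x = ω) (hε : 0 < ε)
    (hηc : ∀ x ∉ Icc s t, ∃ c, η =ᶠ[𝓝 x] fun _ => c) :
    ∀ᶠ δ in 𝓝 0, ∀ x,
      |hillPotential ω (shearFst ω η u δ) (shearSnd ω η u v δ) x - q x| < ε := by
  have hzero (x : ℝ) : hillPotential ω (shearFst ω η u 0) (shearSnd ω η u v 0) x = q x :=
    hu.hillPotential_eq hv hω (hW x) (.of_forall fun y => by simp [shearFst, shearFactor])
      (.of_forall fun y => by simp [shearSnd, shearFactor])
  have hIcc : ∀ᶠ δ in 𝓝 0, ∀ x ∈ Icc s t,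
      |hillPotential ω (shearFst ω η u δ) (shearSnd ω η u v δ) x - q x| < ε := by
    refine isCompact_Icc.eventually_forall_of_forall_eventually fun x _ => ?_
    have hcont := (continuousAt_uncurry_hillPotential (ω := ω)
      (contDiffAt_shearFst (ω := ω) (δ := 0) (x := x) hη (hu.contDiff hq) (by simp))
      (contDiffAt_shearSnd (ω := ω) hη (hu.contDiff hq) (by simp) (hv.contDiff hq))).sub
      (hq.continuous.comp continuous_snd).continuousAt
    exact hcont.abs.eventually (gt_mem_nhds (by simpa [hzero x] using hε))
  filter_upwards [hIcc] with δ hδ x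
  by_cases hx : x ∈ Icc s t
  · exact hδ x hx
  · obtain ⟨c, hc⟩ := hηc x hx
    rw [hu.hillPotential_eq (hu.linear_comb hv (δ * c) 1) hω _ (shearFst_eventuallyEq hc)
      (shearSnd_eventuallyEq hc)]
    · simpa using hε
    · linear_combination hW x

end Shear

theorem contDiffAt_of_uncurry {f : ℝ → ℝ → ℝ} {δ x : ℝ}
    (hf : ContDiffAt ℝ (⊤ : ℕ∞) (Function.uncurry f) (δ, x)) :
    ContDiffAt ℝ (⊤ : ℕ∞) (f δ) x :=
  hf.comp x (f := fun y => (δ, y)) (contDiffAt_const.prodMk contDiffAt_id)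

theorem IsSolMatrix.column_wronskian {q : ℝ → ℝ} {Φ : ℝ → Mat2} (hΦ : IsSolMatrix q Φ)
    (hdet : (Φ 0).det = 1) {i j : Fin 2} (hij : i ≠ j) :
    ∃ ω ≠ 0, ∀ x, Φ x 0 i * Φ x 1 j - Φ x 1 i * Φ x 0 j = ω := by
  have hdet' (x : ℝ) := (hΦ.det_eq x 0).trans hdet
  simp only [Matrix.det_fin_two] at hdet'
  obtain ⟨rfl, rfl⟩ | ⟨rfl, rfl⟩ : i = 0 ∧ j = 1 ∨ i = 1 ∧ j = 0 := by lia
  · exact ⟨1, one_ne_zero, fun x => by linear_combination hdet' x⟩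
  · exact ⟨-1, by norm_num, fun x => by linear_combination -hdet' x⟩

/-- The potential solved by `shearFst` and `shearSnd`, for `u` and `v` the columns `i` and `j`
of `Φ`. -/
def shearPotential (ω : ℝ) (η : ℝ → ℝ) (Φ : ℝ → Mat2) (i j : Fin 2) (δ : ℝ) : ℝ → ℝ :=
  hillPotential ω (shearFst ω η (Φ · 0 i) δ) (shearSnd ω η (Φ · 0 i) (Φ · 0 j) δ)

/-- The solution matrix with columns `i` and `j` those of `shearFst` and `shearSnd`, for `u` and `v`
the columns `i` and `j` of `Φ`. -/
def shearMatrix (ω : ℝ) (η : ℝ → ℝ) (Φ : ℝ → Mat2) (i j : Fin 2) (δ x : ℝ) : Mat2 :=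
  let f := shearFst ω η (Φ · 0 i) δ
  let g := shearSnd ω η (Φ · 0 i) (Φ · 0 j) δ
  .of fun r k => if k = j then ![g x, deriv g x] r else ![f x, deriv f x] r

namespace IsSolMatrix

variable {q η : ℝ → ℝ} {Φ : ℝ → Mat2} {ω δ c s t x ε : ℝ} {i j : Fin 2}

theorem shearMatrix_eq (hΦ : IsSolMatrix q Φ) (hij : i ≠ j) (hη : η =ᶠ[𝓝 x] fun _ => c) :
    shearMatrix ω η Φ i j δ x = Φ x * Matrix.transvection i j (δ * c) := by
  have hfst := shearFst_eventuallyEq (ω := ω) (u := (Φ · 0 i)) (δ := δ) hη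
  have hsnd := shearSnd_eventuallyEq (ω := ω) (u := (Φ · 0 i)) (v := (Φ · 0 j)) (δ := δ) hη
  ext r k
  by_cases hk : k = j
  · subst hk
    rw [Matrix.mul_transvection_apply_same]
    fin_cases r
    · simp [shearMatrix, hsnd.self_of_nhds]
      ring
    · have hderiv := hsnd.deriv_eq.trans (((hΦ i).linear_comb (hΦ k) _ _).hasDerivAt x).deriv
      simp [shearMatrix, hderiv]
      ring
  · obtain rfl : k = i := by lia
    rw [Matrix.mul_transvection_apply_of_ne _ _ _ _ hk]
    fin_cases r
    · simp [shearMatrix, hk, hfst.self_of_nhds]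
    · simp [shearMatrix, hk, hfst.deriv_eq, ((hΦ k).hasDerivAt x).deriv]

theorem isSolMatrix_shearMatrix (hΦ : IsSolMatrix q Φ) (hq : ContDiff ℝ (⊤ : ℕ∞) q)
    (hη : ContDiff ℝ (⊤ : ℕ∞) η) (hω : ω ≠ 0)
    (hW : ∀ x, Φ x 0 i * Φ x 1 j - Φ x 1 i * Φ x 0 j = ω)
    (hpos : ∀ x, 0 < 1 + δ / ω * (deriv η x * Φ x 0 i ^ 2)) :
    ContDiff ℝ (⊤ : ℕ∞) (shearPotential ω η Φ i j δ) ∧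
      IsSolMatrix (shearPotential ω η Φ i j δ) (shearMatrix ω η Φ i j δ) := by
  have hf : ContDiff ℝ (⊤ : ℕ∞) (shearFst ω η (Φ · 0 i) δ) := contDiff_iff_contDiffAt.2 fun x =>
    contDiffAt_of_uncurry (contDiffAt_shearFst hη ((hΦ i).contDiff hq) (hpos x))
  have hg : ContDiff ℝ (⊤ : ℕ∞) (shearSnd ω η (Φ · 0 i) (Φ · 0 j) δ) :=
    contDiff_iff_contDiffAt.2 fun x => contDiffAt_of_uncurry
      (contDiffAt_shearSnd hη ((hΦ i).contDiff hq) (hpos x) ((hΦ j).contDiff hq))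
  have hfg x := shear_wronskian_eq hη (hΦ i) (hΦ j) hq hω (hW x) (hpos x)
  refine ⟨contDiff_hillPotential hf hg, fun k => ?_⟩
  by_cases hk : k = j
  · rw [shearPotential, ← hillPotential_swap]
    simpa [shearMatrix, hk] using isSol_hillPotential (neg_ne_zero.2 hω) hg hf
      fun x => by linear_combination -hfg x
  · simpa [shearMatrix, shearPotential, hk] using isSol_hillPotential hω hf hg hfg

/-- Adding `δ` times column `i` to column `j` across `[s, t]` costs only a small change of the
potential there. -/
theorem eventually_exists_shear (hΦ : IsSolMatrix q Φ) (hq : ContDiff ℝ (⊤ : ℕ∞) q)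
    (hdet : (Φ 0).det = 1) (hst : s < t) (hε : 0 < ε) (hij : i ≠ j) :
    ∀ᶠ δ in 𝓝 0, ∃ p Ψ, ContDiff ℝ (⊤ : ℕ∞) p ∧ IsSolMatrix p Ψ ∧
      (∀ x ∉ Icc s t, p x = q x) ∧ (∀ x, |p x - q x| < ε) ∧
      (∀ x < s, Ψ x = Φ x) ∧ ∀ x > t, Ψ x = Φ x * Matrix.transvection i j δ := by
  obtain ⟨ω, hω, hW⟩ := hΦ.column_wronskian hdet hij
  obtain ⟨η, hη, hηs, hηt⟩ := exists_smooth_step hst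
  have hη_left (x : ℝ) (hx : x < s) : η =ᶠ[𝓝 x] fun _ => 0 := by
    filter_upwards [Iio_mem_nhds hx] with y hy using hηs y hy.le
  have hη_right (x : ℝ) (hx : t < x) : η =ᶠ[𝓝 x] fun _ => 1 := by
    filter_upwards [Ioi_mem_nhds hx] with y hy using hηt y hy.le
  have hηc (x : ℝ) (hx : x ∉ Icc s t) : ∃ c, η =ᶠ[𝓝 x] fun _ => c := by
    rw [mem_Icc, not_and_or, not_le, not_le] at hx
    exact hx.elim (fun h => ⟨0, hη_left x h⟩) fun h => ⟨1, hη_right x h⟩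
  filter_upwards [eventually_shear_radicand_pos (ω := ω) hη ((hΦ i).contDiff hq).continuous hηc,
    eventually_abs_shear_hillPotential_sub_lt hη (hΦ i) (hΦ j) hq hω hW hε hηc] with δ hpos hclose
  obtain ⟨hp, hsol⟩ := hΦ.isSolMatrix_shearMatrix hq hη hω hW hpos
  refine ⟨_, _, hp, hsol, fun x hx => ?_, hclose, fun x hx => ?_, fun x hx => ?_⟩
  · obtain ⟨c, hc⟩ := hηc x hx
    rw [shearPotential, (hΦ i).hillPotential_eq ((hΦ i).linear_comb (hΦ j) (δ * c) 1) hω _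
      (shearFst_eventuallyEq hc) (shearSnd_eventuallyEq hc)]
    linear_combination hW x
  · simpa using hΦ.shearMatrix_eq hij (hη_left x hx)
  · simpa using hΦ.shearMatrix_eq hij (hη_right x hx)

end IsSolMatrix

namespace SmoothBlock

variable {a E ε : ℝ}

theorem contDiff_sub_const (ψ : SmoothBlock a) (E : ℝ) : ContDiff ℝ (⊤ : ℕ∞) fun x => ψ x - E :=
  ψ.contDiff.sub contDiff_const

/-- The transfer matrix over `[0, a]` of `-u'' + ψ u = E u`. -/
def transfer (E : ℝ) (ψ : SmoothBlock a) : Mat2 :=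
  (exists_isTransfer (ψ.contDiff_sub_const E).continuous a).choose

theorem isTransfer_transfer (E : ℝ) (ψ : SmoothBlock a) :
    IsTransfer (fun x => ψ x - E) a (transfer E ψ) :=
  (exists_isTransfer (ψ.contDiff_sub_const E).continuous a).choose_spec

theorem transfer_eq {B : Mat2} {ψ : SmoothBlock a} (hB : IsTransfer (fun x => ψ x - E) a B) :
    transfer E ψ = B := by
  obtain ⟨Φ, hΦ, hΦ₀, rfl⟩ := hB
  simpa [hΦ₀] using ((isTransfer_transfer E ψ).apply (x₀ := 0) hΦ (by simp [EqOn])).symm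

theorem det_transfer (E : ℝ) (ψ : SmoothBlock a) : (transfer E ψ).det = 1 :=
  (isTransfer_transfer E ψ).det_eq_one

theorem exists_coe_eq {p : ℝ → ℝ} (ψ : SmoothBlock a) (ha : 0 < a) (hp : ContDiff ℝ (⊤ : ℕ∞) p)
    (hoff : ∀ x ∉ Icc (a / 3) (2 * a / 3), p x = ψ x) : ∃ χ : SmoothBlock a, ⇑χ = p := by
  have hsub : tsupport p ⊆ Icc (a / 3) (2 * a / 3) ∪ tsupport ψ := by
    refine closure_minimal (fun x hx => ?_) (isClosed_Icc.union (isClosed_tsupport ψ))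
    by_contra hcon
    rw [mem_union, not_or] at hcon
    exact hx ((hoff x hcon.1).trans (image_eq_zero_of_notMem_tsupport hcon.2))
  have hmid : Icc (a / 3) (2 * a / 3) ⊆ Ioo 0 a :=
    fun x hx => ⟨by linarith [hx.1], by linarith [hx.2]⟩
  exact ⟨⟨p, hp, (isCompact_Icc.union ψ.hasCompactSupport).of_isClosed_subset
    (isClosed_tsupport p) hsub, hsub.trans (union_subset hmid ψ.tsupport_subset)⟩, rfl⟩

theorem eventually_exists_transfer_mul_transvection (ha : 0 < a) (hε : 0 < ε) (E : ℝ)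
    (ψ : SmoothBlock a) {i j : Fin 2} (hij : i ≠ j) :
    ∀ᶠ δ in 𝓝 0, ∃ χ : SmoothBlock a, (∀ x, |χ x - ψ x| < ε) ∧
      transfer E χ = transfer E ψ * Matrix.transvection i j δ := by
  obtain ⟨Φ, hΦ, hΦ₀, hΦa⟩ := isTransfer_transfer E ψ
  filter_upwards [hΦ.eventually_exists_shear (ψ.contDiff_sub_const E) (by simp [hΦ₀])
    (by linarith : a / 3 < 2 * a / 3) hε hij] with δ ⟨p, Ψ, hp, hΨ, hoff, hclose, hleft, hright⟩
  obtain ⟨χ, hχ⟩ := ψ.exists_coe_eq ha (hp.add contDiff_const) (p := fun x => p x + E)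
    fun x hx => by simp [hoff x hx]
  refine ⟨χ, fun x => ?_, transfer_eq ⟨Ψ, ?_, ?_, ?_⟩⟩
  · simpa [hχ, sub_sub_eq_add_sub] using hclose x
  · simpa [hχ] using hΨ
  · rw [hleft 0 (by linarith), hΦ₀]
  · rw [hright a (by linarith), hΦa]

/-- The transfer matrices at energy `E` of the smooth blocks within distance `ε` of `φ`. -/
def nearTransfers (E : ℝ) (φ : L2I a) (ε : ℝ) : Set Mat2 :=
  transfer E '' {ψ | dist φ (toL2 ψ) < ε}

theorem eventually_mul_transvection_mem_nearTransfers (ha : 0 < a) {φ : L2I a} {X : Mat2}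
    (hX : X ∈ nearTransfers E φ ε) {i j : Fin 2} (hij : i ≠ j) :
    ∀ᶠ δ in 𝓝 0, X * Matrix.transvection i j δ ∈ nearTransfers E φ ε := by
  obtain ⟨ψ, hψ : dist φ (toL2 ψ) < ε, rfl⟩ := hX
  obtain ⟨r, hr, hrε⟩ := exists_between (sub_pos.2 hψ)
  have ha' : 0 < √a := Real.sqrt_pos.2 ha
  filter_upwards [eventually_exists_transfer_mul_transvection ha (div_pos hr ha') E ψ hij]
    with δ ⟨χ, hclose, hχ⟩
  refine ⟨χ, ?_, hχ⟩
  have hdist : dist (toL2 ψ) (toL2 χ) ≤ √a * (r / √a) := dist_toL2_le ha.le (div_pos hr ha').le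
    fun x => by rw [abs_sub_comm]; exact (hclose x).le
  rw [mul_div_cancel₀ _ ha'.ne'] at hdist
  exact (dist_triangle _ _ _).trans_lt (by linarith)

theorem span_pow_nearTransfers_eq_top (ha : 0 < a) (E : ℝ) (φ : L2I a) (hε : 0 < ε) {n : ℕ}
    (hn : 0 < n) : Submodule.span ℝ ((· ^ n) '' nearTransfers E φ ε) = ⊤ := by
  refine span_pow_eq_top ?_ ?_ (fun X hX i j => eventually_mul_transvection_mem_nearTransfers ha hX)
    hn
  · obtain ⟨ψ, hψ⟩ := (denseRange_toL2 a).exists_dist_lt φ hε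
    exact ⟨_, ψ, hψ, rfl⟩
  · rintro _ ⟨ψ, -, rfl⟩
    exact det_transfer E ψ

end SmoothBlock

/-! ### Words with hyperbolic monodromy -/

open scoped Pointwise

section Cocycle

variable {M : Type*} [Monoid M]

/-- The ordered product `A (k - 1) * ⋯ * A 1 * A 0`: the monodromy of a word whose `i`-th letter
has transfer matrix `A i`. -/
def cocycle (A : ℕ → M) : ℕ → M
  | 0 => 1
  | k + 1 => A k * cocycle A k

theorem cocycle_add (A : ℕ → M) (k l : ℕ) :
    cocycle A (k + l) = cocycle (fun i => A (k + i)) l * cocycle A k := by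
  induction l with
  | zero => simp [cocycle]
  | succ l ih => rw [← add_assoc, cocycle, ih, cocycle, mul_assoc]

theorem cocycle_mul (A : ℕ → M) (m k : ℕ) :
    cocycle A (m * k) = cocycle (fun i => cocycle (fun r => A (m * i + r)) m) k := by
  induction k with
  | zero => simp [cocycle]
  | succ k ih => rw [mul_add, mul_one, cocycle_add, ih, cocycle]

theorem cocycle_congr {A B : ℕ → M} {k : ℕ} (h : ∀ i < k, A i = B i) :
    cocycle A k = cocycle B k := by
  induction k with
  | zero => rfl
  | succ k ih => simp only [cocycle, h k (by omega), ih fun i hi => h i (by omega)]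

theorem cocycle_const (A : M) (k : ℕ) : cocycle (fun _ => A) k = A ^ k := by
  induction k with
  | zero => simp [cocycle]
  | succ k ih => rw [cocycle, ih, pow_succ']

theorem map_cocycle {N : Type*} [Monoid N] (f : M →* N) (A : ℕ → M) (k : ℕ) :
    f (cocycle A k) = cocycle (f ∘ A) k := by
  induction k with
  | zero => simp [cocycle]
  | succ k ih => simp [cocycle, ih]

theorem mem_cocycle_set {T : ℕ → Set M} (hT : ∀ i, (T i).Nonempty) {k : ℕ} {B : M} :
    B ∈ cocycle T k ↔ ∃ A : ℕ → M, (∀ i, A i ∈ T i) ∧ cocycle A k = B := by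
  induction k generalizing B with
  | zero =>
    choose A hA using hT
    exact ⟨fun h => ⟨A, hA, (Set.mem_one.1 h).symm⟩, fun ⟨_, _, h⟩ => h ▸ Set.one_mem_one⟩
  | succ k ih =>
    refine ⟨?_, fun ⟨A, hA, hAB⟩ => hAB ▸ mul_mem_mul (hA k) (ih.2 ⟨A, hA, rfl⟩)⟩
    rintro ⟨C, hC, D, hD, rfl⟩
    obtain ⟨A, hA, rfl⟩ := ih.1 hD
    refine ⟨Function.update A k C, fun i => ?_, ?_⟩
    · rcases eq_or_ne i k with rfl | hik
      · rwa [Function.update_self]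
      · rw [Function.update_of_ne hik]
        exact hA i
    · rw [cocycle, Function.update_self,
        cocycle_congr fun i hi => Function.update_of_ne (by omega) C A]

theorem exists_mem_pow_of_mem_closure {S : Set M} {A : M} (hA : A ∈ Submonoid.closure S) :
    ∃ k : ℕ, A ∈ S ^ k := by
  induction hA using Submonoid.closure_induction with
  | mem A hA => exact ⟨1, by rwa [pow_one]⟩
  | one => exact ⟨0, by simp⟩
  | mul A B _ _ hA hB =>
    obtain ⟨k, hk⟩ := hA
    obtain ⟨l, hl⟩ := hB
    exact ⟨k + l, pow_add S k l ▸ mul_mem_mul hk hl⟩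

end Cocycle

theorem span_cocycle_set_eq_top {R A : Type*} [CommSemiring R] [Semiring A] [Algebra R A]
    {T : ℕ → Set A} (hT : ∀ i, Submodule.span R (T i) = ⊤) {k : ℕ} (hk : 0 < k) :
    Submodule.span R (cocycle T k) = ⊤ := by
  induction k, hk using Nat.le_induction with
  | base => simpa [cocycle] using hT 0
  | succ k _ ih =>
    rw [cocycle, ← Submodule.span_mul_span, hT, ih, eq_top_iff]
    exact fun x _ => mul_one x ▸ Submodule.mul_mem_mul Submodule.mem_top Submodule.mem_top

theorem exists_isHyperbolic_cocycle {T : ℕ → Set Mat2} {m : ℕ} (hm : 0 < m)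
    (hper : Function.Periodic T m) (hdet : ∀ i, ∀ A ∈ T i, A.det = 1)
    (hspan : ∀ i, Submodule.span ℝ (T i) = ⊤) :
    ∃ K > 0, ∃ A : ℕ → Mat2, (∀ i, A i ∈ T i) ∧ (cocycle A (m * K)).IsHyperbolic := by
  have hT (i : ℕ) : (T i).Nonempty := by
    rw [nonempty_iff_ne_empty]
    intro hempty
    simpa [hempty] using hspan i
  have hdet_cocycle {k : ℕ} : ∀ B ∈ cocycle T k, B.det = 1 := by
    rintro B hB
    obtain ⟨A, hA, rfl⟩ := (mem_cocycle_set hT).1 hB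
    calc (cocycle A k).det = cocycle (fun i => (A i).det) k := map_cocycle Matrix.detMonoidHom A k
      _ = cocycle (fun _ => 1) k := cocycle_congr fun i _ => hdet i _ (hA i)
      _ = 1 := by rw [cocycle_const, one_pow]
  obtain ⟨B, hB, hyp⟩ := exists_isHyperbolic_of_span_eq_top hdet_cocycle
    (span_cocycle_set_eq_top hspan hm)
  obtain ⟨K, hK⟩ := exists_mem_pow_of_mem_closure hB
  have hpow : cocycle T m ^ K = cocycle T (m * K) := by
    rw [cocycle_mul, ← cocycle_const]
    refine cocycle_congr fun i _ => cocycle_congr fun r _ => ?_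
    rw [add_comm, mul_comm]
    exact (hper.nat_mul i r).symm
  obtain ⟨A, hA, rfl⟩ := (mem_cocycle_set hT).1 (hpow ▸ hK)
  refine ⟨K, Nat.pos_of_ne_zero ?_, A, hA, hyp⟩
  rintro rfl
  rw [mul_zero, isHyperbolic_iff_of_det_eq_one (by simp [cocycle])] at hyp
  norm_num [cocycle, Matrix.trace_one] at hyp

theorem exists_isHyperbolic_smoothBlock_word {a ε : ℝ} (ha : 0 < a) (E : ℝ) {φ : ℕ → L2I a}
    {m n : ℕ} (hm : 0 < m) (hφ : Function.Periodic φ m) (hε : 0 < ε) (hn : 0 < n) :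
    ∃ K > 0, ∃ ψ : ℕ → SmoothBlock a, (∀ i, dist (φ i) (ψ i).toL2 < ε) ∧
      (cocycle (fun i => (ψ i).transfer E ^ n) (m * K)).IsHyperbolic := by
  obtain ⟨K, hK, A, hA, hyp⟩ := exists_isHyperbolic_cocycle
    (T := fun i => (· ^ n) '' SmoothBlock.nearTransfers E (φ i) ε) hm (fun i => by simp only [hφ i])
    (by
      rintro i _ ⟨_, ⟨ψ, -, rfl⟩, rfl⟩
      simp [ψ.det_transfer])
    (fun i => SmoothBlock.span_pow_nearTransfers_eq_top ha E (φ i) hε hn)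
  choose B hB hBA using hA
  choose ψ hψ hψB using hB
  refine ⟨K, hK, ψ, hψ, ?_⟩
  convert hyp using 3 with i
  rw [hψB]
  exact hBA i

/-! ### Concatenation of smooth blocks -/

section Glue

variable {a : ℝ}

/-- The bi-infinite concatenation of the blocks `P k`, the `k`-th one occupying `[ka, (k+1)a)`. -/
def glue (a : ℝ) (P : ℤ → SmoothBlock a) (t : ℝ) : ℝ := P ⌊t / a⌋ (t - ⌊t / a⌋ * a)

theorem floor_div_eq_iff (ha : 0 < a) {t : ℝ} {k : ℤ} : ⌊t / a⌋ = k ↔ t - k * a ∈ Ico 0 a := by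
  rw [Int.floor_eq_iff, le_div_iff₀ ha, div_lt_iff₀ ha, mem_Ico, sub_nonneg, sub_lt_iff_lt_add',
    add_one_mul]

theorem glue_apply (ha : 0 < a) (P : ℤ → SmoothBlock a) {k : ℤ} {t : ℝ}
    (ht : t - k * a ∈ Icc 0 a) : glue a P t = P k (t - k * a) := by
  rcases ht.2.lt_or_eq with hlt | heq
  · rw [glue, (floor_div_eq_iff ha).2 ⟨ht.1, hlt⟩]
  · have hzero : t - (k + 1 : ℤ) * a = 0 := by
      push_cast
      linarith
    rw [glue, (floor_div_eq_iff ha (k := k + 1)).2 (by rw [hzero]; exact left_mem_Ico.2 ha),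
      hzero, heq, SmoothBlock.apply_eq_zero _ (by simp),
      SmoothBlock.apply_eq_zero _ (by simp)]

theorem contDiff_glue (ha : 0 < a) (P : ℤ → SmoothBlock a) :
    ContDiff ℝ (⊤ : ℕ∞) (glue a P) := by
  refine contDiff_iff_contDiffAt.2 fun x => ?_
  obtain ⟨h₀, h₁⟩ := (floor_div_eq_iff ha).1 (Eq.refl ⌊x / a⌋)
  set k := ⌊x / a⌋
  have hcont (j : ℤ) : ContDiff ℝ (⊤ : ℕ∞) fun y => P j (y - j * a) :=
    (P j).contDiff.comp (contDiff_id.sub contDiff_const)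
  refine ((hcont (k - 1)).add (hcont k)).contDiffAt.congr_of_eventuallyEq ?_
  filter_upwards [Ioo_mem_nhds (show x - a < x by linarith)
    (show x < k * a + a by linarith)] with y ⟨hy₀, hy₁⟩
  rcases lt_or_ge y (k * a) with hy | hy
  · rw [glue_apply ha P (k := k - 1) (by push_cast; constructor <;> linarith),
      SmoothBlock.apply_eq_zero (P k) fun h => by linarith [h.1], add_zero]
  · rw [glue_apply ha P (k := k) ⟨by linarith, by linarith⟩,
      SmoothBlock.apply_eq_zero (P (k - 1)) fun h => by push_cast at h; linarith [h.2], zero_add]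

theorem periodic_glue (ha : 0 < a) {P : ℤ → SmoothBlock a} {N : ℕ} (hP : Function.Periodic P N) :
    Function.Periodic (glue a P) (N * a) := by
  intro t
  have hfloor : ⌊(t + N * a) / a⌋ = ⌊t / a⌋ + N := by
    rw [add_div, mul_div_cancel_right₀ _ ha.ne', Int.floor_add_natCast]
  rw [glue, glue, hfloor, hP]
  congr 1
  push_cast
  ring

theorem isTransfer_glue (ha : 0 < a) (P : ℤ → SmoothBlock a) (E : ℝ) (N : ℕ) :
    IsTransfer (fun x => glue a P x - E) (N * a)
      (cocycle (fun k : ℕ => (P k).transfer E) N) := by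
  obtain ⟨Φ, hΦ, hΦ₀⟩ :=
    exists_isSolMatrix ((contDiff_glue ha P).continuous.sub (continuous_const (y := E))) 1
  refine ⟨Φ, hΦ, hΦ₀, ?_⟩
  induction N with
  | zero => simpa [cocycle] using hΦ₀
  | succ N ih =>
    have hblock : EqOn (fun t => glue a P (N * a + t) - E) (fun t => P N t - E) (uIcc 0 a) := by
      intro t ht
      rw [uIcc_of_le ha.le] at ht
      simp [glue_apply ha P (k := N) (t := N * a + t) (by simpa using ht)]
    rw [cocycle, ← ih, Nat.cast_succ, add_one_mul]
    exact ((P N).isTransfer_transfer E).apply hΦ hblock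

end Glue

/-! ### Exponential dichotomy of periodic potentials -/

/-- An exponential dichotomy for `u'' = q u` with rate `γ` and constant `C`: the first column of the
unimodular solution matrix `Ψ` decays at `∞` and the second one at `-∞`. -/
structure IsDichotomy (q : ℝ → ℝ) (Ψ : ℝ → Mat2) (γ C : ℝ) : Prop where
  isSolMatrix : IsSolMatrix q Ψ
  det_eq_one : ∀ x, (Ψ x).det = 1
  rate_pos : 0 < γ
  abs_col_zero_le : ∀ x i, |Ψ x i 0| ≤ C * Real.exp (-γ * x)
  abs_col_one_le : ∀ x i, |Ψ x i 1| ≤ C * Real.exp (γ * x)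

theorem eventually_abs_le_of_multiplicative {u : ℝ → ℝ} (hu : Continuous u) {L : ℝ} (hL : L ≠ 0)
    {θ μ : ℝ} (hμ : |μ| = Real.exp (θ * L)) (hper : ∀ x, u (x + L) = μ * u x) :
    ∀ᶠ C in atTop, ∀ x, |u x| ≤ C * Real.exp (θ * x) := by
  have hp : Function.Periodic (fun x => |u x| * Real.exp (-(θ * x))) L := fun x => by
    simp only [hper, abs_mul, hμ, mul_add, neg_add, Real.exp_add, Real.exp_neg]
    field_simp
  obtain ⟨C₀, hC₀⟩ := (hp.isBounded_of_continuous hL (by fun_prop)).exists_norm_le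
  filter_upwards [eventually_ge_atTop C₀] with C hC x
  have hx : |u x| * Real.exp (-(θ * x)) ≤ C :=
    (Real.le_norm_self _).trans ((hC₀ _ ⟨x, rfl⟩).trans hC)
  rwa [Real.exp_neg, ← div_eq_mul_inv, div_le_iff₀ (Real.exp_pos _)] at hx

theorem IsSolMatrix.apply_add_period {q : ℝ → ℝ} {L : ℝ} (hper : Function.Periodic q L)
    {Φ : ℝ → Mat2} (hΦ : IsSolMatrix q Φ) (hΦ₀ : Φ 0 = 1) (x : ℝ) : Φ (x + L) = Φ x * Φ L := by
  have hshift : IsSolMatrix q fun x => Φ (L + x) := by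
    simpa only [add_comm L, hper _] using hΦ.comp_const_add L
  have hdet : (Φ x).det = 1 := by simpa [hΦ₀] using hΦ.det_eq x 0
  have hadj : (Φ x).adjugate * Φ (L + x) = Φ L := by
    simpa [hΦ₀] using hΦ.adjugate_mul_eq hshift (eqOn_refl q (uIcc x 0))
  rw [← hadj, ← mul_assoc, Matrix.mul_adjugate, hdet, one_smul, one_mul, add_comm]

theorem exists_isDichotomy {q : ℝ → ℝ} {L : ℝ} (hL : 0 < L)
    (hper : Function.Periodic q L) {M : Mat2} (hM : IsTransfer q L M) (hyp : M.IsHyperbolic) :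
    ∃ Ψ γ C, IsDichotomy q Ψ γ C := by
  obtain ⟨P, μ, hP, hμ₀, hμ₁, hMP⟩ := exists_diagonalization hM.det_eq_one hyp
  obtain ⟨Φ, hΦ, hΦ₀, rfl⟩ := hM
  have hΨ := hΦ.mul_const P
  have hfloquet (x : ℝ) : Φ (x + L) * P = Φ x * P * .diagonal ![μ, μ⁻¹] := by
    rw [hΦ.apply_add_period hper hΦ₀, mul_assoc, hMP, mul_assoc]
  have hμpos : 0 < |μ| := abs_pos.2 hμ₀
  set γ := -Real.log |μ| / L
  have hγL : γ * L = -Real.log |μ| := div_mul_cancel₀ _ hL.ne'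
  have hcol₀ : ∀ᶠ C in atTop, ∀ i x, |(Φ x * P) i 0| ≤ C * Real.exp (-γ * x) :=
    eventually_all.2 fun i => eventually_abs_le_of_multiplicative (hΨ.continuous_apply i 0) hL.ne'
      (μ := μ) (by rw [neg_mul, hγL, neg_neg, Real.exp_log hμpos])
      fun x => by rw [hfloquet, Matrix.mul_diagonal]; simp [mul_comm]
  have hcol₁ : ∀ᶠ C in atTop, ∀ i x, |(Φ x * P) i 1| ≤ C * Real.exp (γ * x) :=
    eventually_all.2 fun i => eventually_abs_le_of_multiplicative (hΨ.continuous_apply i 1) hL.ne'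
      (μ := μ⁻¹) (by rw [hγL, Real.exp_neg, Real.exp_log hμpos, abs_inv])
      fun x => by rw [hfloquet, Matrix.mul_diagonal]; simp [mul_comm]
  obtain ⟨C, h₀, h₁⟩ := (hcol₀.and hcol₁).exists
  refine ⟨fun x => Φ x * P, γ, C, hΨ, fun x => ?_,
    div_pos (neg_pos.2 (Real.log_neg hμpos hμ₁)) hL, fun x i => h₀ i x, fun x i => h₁ i x⟩
  rw [hΨ.det_eq x 0, hΦ₀, one_mul, hP]

/-! ### The Schrödinger operator on test functions -/

/-- Smooth compactly supported functions on the line. -/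
abbrev TestFn := 𝓓((⊤ : TopologicalSpace.Opens ℝ), ℝ)

namespace TestFn

/-- The class of a test function in `L²(ℝ)`. -/
def toL2 : TestFn →ₗ[ℝ] L2R := testToL2 ⊤ volume

/-- Differentiation of test functions. -/
def derivative : TestFn →ₗ[ℝ] TestFn := (TestFunction.lineDerivCLM ℝ (1 : ℝ)).toLinearMap

/-- Multiplication of test functions by a smooth function. -/
def smoothMul {m : ℝ → ℝ} (hm : ContDiff ℝ (⊤ : ℕ∞) m) : TestFn →ₗ[ℝ] TestFn where
  toFun φ := ⟨fun x => m x * φ x, hm.mul φ.contDiff, φ.hasCompactSupport.mul_left, subset_univ _⟩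
  map_add' φ ψ := by ext x; exact mul_add (m x) (φ x) (ψ x)
  map_smul' c φ := by ext x; exact mul_left_comm (m x) c (φ x)

/-- The Schrödinger operator `φ ↦ -φ'' + q φ`. -/
def schrodinger {q : ℝ → ℝ} (hq : ContDiff ℝ (⊤ : ℕ∞) q) : TestFn →ₗ[ℝ] TestFn :=
  smoothMul hq - derivative ∘ₗ derivative

theorem coe_derivative (φ : TestFn) : ⇑(derivative φ) = deriv φ := by
  ext x
  refine (TestFunction.lineDerivCLM_apply_of_le le_top).trans ?_
  rw [(φ.contDiff.differentiable (by simp) x).lineDeriv_eq_fderiv, fderiv_apply_one_eq_deriv]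

theorem hasDerivAt (φ : TestFn) (x : ℝ) : HasDerivAt φ (derivative φ x) x := by
  rw [coe_derivative]
  exact (φ.contDiff.differentiable (by simp) x).hasDerivAt

theorem schrodinger_apply {q : ℝ → ℝ} (hq : ContDiff ℝ (⊤ : ℕ∞) q) (φ : TestFn) (x : ℝ) :
    schrodinger hq φ x = q x * φ x - derivative (derivative φ) x := rfl

theorem inner_toL2 (φ ψ : TestFn) : inner ℝ (toL2 φ) (toL2 ψ) = ∫ x, φ x * ψ x := by
  refine (inner_testToL2 _ ψ).trans (integral_congr_ae ?_)
  filter_upwards [coeFn_testToL2 φ] with x hx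
  exact congrArg (· * ψ x) hx

theorem integrable_mul (φ ψ : TestFn) : Integrable fun x => φ x * ψ x :=
  (φ.continuous.mul ψ.continuous).integrable_of_hasCompactSupport φ.hasCompactSupport.mul_right

theorem inner_derivative_left (φ ψ : TestFn) :
    inner ℝ (derivative φ).toL2 ψ.toL2 = -inner ℝ φ.toL2 (derivative ψ).toL2 := by
  rw [inner_toL2, inner_toL2, eq_neg_iff_add_eq_zero,
    ← integral_add (integrable_mul _ _) (integrable_mul _ _)]
  exact integral_eq_zero_of_hasDerivAt_of_integrable
    (fun x => (φ.hasDerivAt x).mul (ψ.hasDerivAt x))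
    ((integrable_mul _ _).add (integrable_mul _ _)) (integrable_mul _ _)

theorem inner_smoothMul_left {m : ℝ → ℝ} (hm : ContDiff ℝ (⊤ : ℕ∞) m) (φ ψ : TestFn) :
    inner ℝ (smoothMul hm φ).toL2 ψ.toL2 = inner ℝ φ.toL2 (smoothMul hm ψ).toL2 := by
  rw [inner_toL2, inner_toL2]
  exact integral_congr_ae (.of_forall fun x =>
    (mul_right_comm _ _ _).trans (mul_comm _ _))

theorem inner_schrodinger_left {q : ℝ → ℝ} (hq : ContDiff ℝ (⊤ : ℕ∞) q) (φ ψ : TestFn) :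
    inner ℝ (schrodinger hq φ).toL2 ψ.toL2 = inner ℝ φ.toL2 (schrodinger hq ψ).toL2 := by
  simp only [schrodinger, LinearMap.sub_apply, LinearMap.comp_apply, map_sub, inner_sub_left,
    inner_sub_right, inner_smoothMul_left, inner_derivative_left, neg_neg]

theorem norm_toL2_smoothMul_le {m : ℝ → ℝ} (hm : ContDiff ℝ (⊤ : ℕ∞) m) {C : ℝ}
    (hC : ∀ x, |m x| ≤ C) (φ : TestFn) : ‖(smoothMul hm φ).toL2‖ ≤ C * ‖φ.toL2‖ := by
  refine Lp.norm_le_mul_norm_of_ae_le_mul ?_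
  filter_upwards [coeFn_testToL2 φ, coeFn_testToL2 (smoothMul hm φ)] with x hφ hmφ
  rw [toL2, hφ, hmφ]
  exact (norm_mul _ _).trans_le (by gcongr; exact hC x)

/-- Pairing the equation with `φ` kills the left-hand side, as differentiation is skew-symmetric. -/
theorem norm_toL2_le_of_derivative_eq {φ ψ : TestFn} {κ : ℝ} (hκ : κ ≠ 0)
    (h : derivative φ = κ • φ - ψ) : ‖φ.toL2‖ ≤ ‖ψ.toL2‖ / |κ| := by
  have hskew : inner ℝ φ.toL2 (derivative φ).toL2 = 0 := by
    linarith [inner_derivative_left φ φ, real_inner_comm φ.toL2 (derivative φ).toL2]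
  rw [h, map_sub, map_smul, inner_sub_right, inner_smul_right, real_inner_self_eq_norm_sq,
    sub_eq_zero] at hskew
  have hmul : |κ| * ‖φ.toL2‖ * ‖φ.toL2‖ ≤ ‖ψ.toL2‖ * ‖φ.toL2‖ :=
    calc |κ| * ‖φ.toL2‖ * ‖φ.toL2‖ = |inner ℝ φ.toL2 ψ.toL2| := by
          rw [← hskew, abs_mul, abs_of_nonneg (sq_nonneg ‖φ.toL2‖), sq, mul_assoc]
      _ ≤ ‖ψ.toL2‖ * ‖φ.toL2‖ := (abs_real_inner_le_norm _ _).trans_eq (mul_comm _ _)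
  rw [le_div_iff₀' (abs_pos.2 hκ)]
  rcases (norm_nonneg φ.toL2).eq_or_lt with h0 | hpos
  · rw [← h0, mul_zero]
    exact norm_nonneg _
  · exact le_of_mul_le_mul_right hmul hpos

/-! ### Coercivity -/

variable {q w w' : ℝ → ℝ}

theorem contDiff_exp_mul {w : ℝ → ℝ} (hw : ContDiff ℝ (⊤ : ℕ∞) w) (κ : ℝ) :
    ContDiff ℝ (⊤ : ℕ∞) fun x => Real.exp (κ * x) * w x := by
  fun_prop

/-- The Wronskian of a solution `w` of `w'' = q w` and a test function, with weight `exp (κ x)`. -/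
def weightedWronskian (hq : ContDiff ℝ (⊤ : ℕ∞) q) (hw : IsSol q w w') (κ : ℝ) (φ : TestFn) :
    TestFn :=
  smoothMul (contDiff_exp_mul (hw.contDiff hq) κ) (derivative φ) -
    smoothMul (contDiff_exp_mul (hw.contDiff' hq) κ) φ

theorem weightedWronskian_apply (hq : ContDiff ℝ (⊤ : ℕ∞) q) (hw : IsSol q w w') (κ : ℝ)
    (φ : TestFn) (x : ℝ) :
    weightedWronskian hq hw κ φ x = Real.exp (κ * x) * (w x * derivative φ x - w' x * φ x) := by
  rw [mul_sub, ← mul_assoc, ← mul_assoc]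
  rfl

theorem derivative_weightedWronskian (hq : ContDiff ℝ (⊤ : ℕ∞) q) (hw : IsSol q w w') (κ : ℝ)
    (φ : TestFn) : derivative (weightedWronskian hq hw κ φ) = κ • weightedWronskian hq hw κ φ -
      smoothMul (contDiff_exp_mul (hw.contDiff hq) κ) (schrodinger hq φ) := by
  ext x
  have hexp : HasDerivAt (fun x => Real.exp (κ * x)) (κ * Real.exp (κ * x)) x := by
    simpa [mul_comm] using ((hasDerivAt_id x).const_mul κ).exp
  have h := hexp.mul (((hw.hasDerivAt x).mul ((derivative φ).hasDerivAt x)).sub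
    ((hw.hasDerivAt' x).mul (φ.hasDerivAt x)))
  have hW := (weightedWronskian hq hw κ φ).hasDerivAt x
  simp only [funext (weightedWronskian_apply hq hw κ φ)] at hW
  rw [hW.unique h]
  change _ = κ * weightedWronskian hq hw κ φ x - Real.exp (κ * x) * w x * schrodinger hq φ x
  rw [weightedWronskian_apply, schrodinger_apply]
  simp only [Pi.sub_apply, Pi.mul_apply]
  ring

theorem abs_exp_mul_le {w : ℝ → ℝ} {κ C : ℝ} (hw : ∀ x, |w x| ≤ C * Real.exp (-κ * x)) (x : ℝ) :
    |Real.exp (κ * x) * w x| ≤ C := by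
  rw [abs_mul, Real.abs_exp]
  calc Real.exp (κ * x) * |w x| ≤ Real.exp (κ * x) * (C * Real.exp (-κ * x)) := by
        gcongr
        exact hw x
    _ = C := by rw [mul_left_comm, ← Real.exp_add, neg_mul, add_neg_cancel, Real.exp_zero, mul_one]

theorem norm_weightedWronskian_le (hq : ContDiff ℝ (⊤ : ℕ∞) q) (hw : IsSol q w w') {κ C : ℝ}
    (hκ : κ ≠ 0) (hC : ∀ x, |w x| ≤ C * Real.exp (-κ * x)) (φ : TestFn) :
    ‖(weightedWronskian hq hw κ φ).toL2‖ ≤ C * ‖(schrodinger hq φ).toL2‖ / |κ| :=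
  (norm_toL2_le_of_derivative_eq hκ (derivative_weightedWronskian hq hw κ φ)).trans <| by
    gcongr
    exact norm_toL2_smoothMul_le _ (abs_exp_mul_le hC) _

/-- With `α = exp (γ x) (u φ' - u' φ)` and `β = exp (-γ x) (v φ' - v' φ)`, where `u` and `v` are the
decaying and the growing solution, `φ = (exp (-γ x) v) α - (exp (γ x) u) β`. -/
theorem norm_toL2_le_schrodinger (hq : ContDiff ℝ (⊤ : ℕ∞) q) {Ψ : ℝ → Mat2} {γ C : ℝ}
    (D : IsDichotomy q Ψ γ C) (φ : TestFn) :
    ‖φ.toL2‖ ≤ 2 * C ^ 2 / γ * ‖(schrodinger hq φ).toL2‖ := by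
  have hu := D.isSolMatrix 0
  have hv := D.isSolMatrix 1
  have hu_le (x : ℝ) : |Ψ x 0 0| ≤ C * Real.exp (-γ * x) := D.abs_col_zero_le x 0
  have hv_le (x : ℝ) : |Ψ x 0 1| ≤ C * Real.exp (-(-γ) * x) := by
    simpa only [neg_neg] using D.abs_col_one_le x 0
  have hC : 0 ≤ C := (abs_nonneg _).trans (abs_exp_mul_le hu_le 0)
  set α := weightedWronskian hq hu γ φ with hα
  set β := weightedWronskian hq hv (-γ) φ with hβ
  have hφ : φ = smoothMul (contDiff_exp_mul (hv.contDiff hq) (-γ)) α -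
      smoothMul (contDiff_exp_mul (hu.contDiff hq) γ) β := by
    ext x
    change φ x = Real.exp (-γ * x) * Ψ x 0 1 * α x - Real.exp (γ * x) * Ψ x 0 0 * β x
    have hdet := D.det_eq_one x
    have hexp : Real.exp (-γ * x) * Real.exp (γ * x) = 1 := by simp [← Real.exp_add]
    rw [Matrix.det_fin_two] at hdet
    rw [hα, hβ, weightedWronskian_apply, weightedWronskian_apply]
    linear_combination (-φ x) * hdet -
      φ x * (Ψ x 0 0 * Ψ x 1 1 - Ψ x 0 1 * Ψ x 1 0) * hexp
  have hγ := D.rate_pos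
  calc ‖φ.toL2‖ ≤ C * ‖α.toL2‖ + C * ‖β.toL2‖ := by
        nth_rw 1 [hφ]
        rw [map_sub]
        exact (norm_sub_le _ _).trans (add_le_add
          (norm_toL2_smoothMul_le _ (abs_exp_mul_le hv_le) α)
          (norm_toL2_smoothMul_le _ (abs_exp_mul_le hu_le) β))
    _ ≤ C * (C * ‖(schrodinger hq φ).toL2‖ / |γ|) + C * (C * ‖(schrodinger hq φ).toL2‖ / |-γ|) := by
        gcongr
        · exact norm_weightedWronskian_le hq hu hγ.ne' hu_le φ
        · exact norm_weightedWronskian_le hq hv (neg_ne_zero.2 hγ.ne') hv_le φ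
    _ = 2 * C ^ 2 / γ * ‖(schrodinger hq φ).toL2‖ := by
        rw [abs_neg, abs_of_pos hγ]
        ring

end TestFn

/-! ### Density of the range -/

theorem integrable_exp_neg_mul_abs {γ : ℝ} (hγ : 0 < γ) :
    Integrable fun x : ℝ => Real.exp (-γ * |x|) := by
  rw [← integrableOn_univ, ← Iic_union_Ioi (a := (0 : ℝ))]
  refine ((integrableOn_exp_mul_Iic hγ 0).congr_fun (fun x hx => ?_) measurableSet_Iic).union
    ((integrableOn_exp_mul_Ioi (neg_lt_zero.2 hγ) 0).congr_fun (fun x hx => ?_) measurableSet_Ioi)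
  · simp only [abs_of_nonpos (mem_Iic.1 hx), neg_mul_neg]
  · simp only [abs_of_pos (mem_Ioi.1 hx)]

theorem memLp_two_of_abs_le_exp_neg_abs {w : ℝ → ℝ} (hw : Continuous w) {K γ : ℝ} (hγ : 0 < γ)
    (h : ∀ x, |w x| ≤ K * Real.exp (-γ * |x|)) : MemLp w 2 := by
  have hexp : MemLp (fun x : ℝ => Real.exp (-γ * |x|)) 2 := by
    rw [memLp_two_iff_integrable_sq (by fun_prop)]
    simpa only [← Real.exp_nat_mul, mul_assoc, mul_neg, neg_mul] using
      integrable_exp_neg_mul_abs (mul_pos (Nat.cast_pos.2 two_pos) hγ)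
  refine hexp.of_le_mul (c := K) hw.aestronglyMeasurable (.of_forall fun x => ?_)
  rw [Real.norm_eq_abs, Real.norm_eq_abs, Real.abs_exp]
  exact h x

theorem contDiff_of_hasDerivAt {H h : ℝ → ℝ} (hH : ∀ x, HasDerivAt H (h x) x)
    (hh : ContDiff ℝ (⊤ : ℕ∞) h) : ContDiff ℝ (⊤ : ℕ∞) H := by
  refine contDiff_infty_iff_deriv.2 ⟨fun x => (hH x).differentiableAt, ?_⟩
  rwa [funext fun x => (hH x).deriv]

/-- Take the primitive that vanishes to the right of the support. -/
theorem exists_primitive_abs_le_exp {h : ℝ → ℝ} (hc : Continuous h) (hs : HasCompactSupport h)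
    {γ : ℝ} (hγ : 0 ≤ γ) :
    ∃ H : ℝ → ℝ, (∀ x, HasDerivAt H (h x) x) ∧
      ∃ K, ∀ x, |H x| ≤ K * Real.exp (-γ * (x + |x|)) := by
  obtain ⟨R, hR, hball⟩ := hs.isBounded.subset_closedBall_lt 0 0
  have hzero (t : ℝ) (ht : R < t) : h t = 0 := image_eq_zero_of_notMem_tsupport fun hmem => by
    have := (le_abs_self t).trans (mem_closedBall_zero_iff.1 (hball hmem))
    linarith
  refine ⟨fun x => ∫ t in R..x, h t, fun x => (hc.integral_hasStrictDerivAt R x).hasDerivAt,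
    (∫ t, ‖h t‖) * Real.exp (γ * (2 * R)), fun x => ?_⟩
  have hnorm : Integrable fun t => ‖h t‖ := (hc.integrable_of_hasCompactSupport hs).norm
  rcases lt_or_ge R x with hx | hx
  · have hvanish : ∫ t in R..x, h t = 0 := by
      refine intervalIntegral.integral_zero_ae (.of_forall fun t ht => ?_)
      rw [uIoc_of_le hx.le] at ht
      exact hzero t ht.1
    simp only [hvanish, abs_zero]
    positivity
  · calc |∫ t in R..x, h t| ≤ ∫ t, ‖h t‖ :=
          intervalIntegral.norm_integral_le_integral_norm_uIoc.trans
            (setIntegral_le_integral hnorm (.of_forall fun t => norm_nonneg _))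
      _ ≤ (∫ t, ‖h t‖) * Real.exp (γ * (2 * R) + -γ * (x + |x|)) := by
          refine le_mul_of_one_le_right (by positivity) (Real.one_le_exp ?_)
          have : x + |x| ≤ 2 * R := by
            rcases abs_cases x with ⟨hx', _⟩ | ⟨hx', _⟩ <;> linarith
          nlinarith
      _ = (∫ t, ‖h t‖) * Real.exp (γ * (2 * R)) * Real.exp (-γ * (x + |x|)) := by
          rw [Real.exp_add, mul_assoc]

theorem abs_mul_le_of_abs_le_exp {y z C K s t : ℝ} (hy : |y| ≤ C * Real.exp s)
    (hz : |z| ≤ K * Real.exp t) : |y * z| ≤ C * K * Real.exp (s + t) := by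
  rw [abs_mul, Real.exp_add, mul_mul_mul_comm]
  exact mul_le_mul hy hz (abs_nonneg _) ((abs_nonneg _).trans hy)

/-- Variation of constants gives the solution `φ = v a - u b` with `a' = -u f` and `b' = -v f`,
where `u` and `v` are the decaying and the growing solution; `a` is chosen to vanish near `∞` and
`b` near `-∞`. -/
theorem exists_memLp_solution {q : ℝ → ℝ} (hq : ContDiff ℝ (⊤ : ℕ∞) q) {Ψ : ℝ → Mat2} {γ C : ℝ}
    (D : IsDichotomy q Ψ γ C) (f : TestFn) :
    ∃ φ φ' : ℝ → ℝ, ContDiff ℝ (⊤ : ℕ∞) φ ∧ (∀ x, HasDerivAt φ (φ' x) x) ∧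
      (∀ x, HasDerivAt φ' (q x * φ x - f x) x) ∧ MemLp φ 2 ∧ MemLp φ' 2 := by
  have hu := D.isSolMatrix 0
  have hv := D.isSolMatrix 1
  have hu_smooth := hu.contDiff hq
  have hv_smooth := hv.contDiff hq
  have hγ := D.rate_pos
  obtain ⟨a, ha, K, haK⟩ := exists_primitive_abs_le_exp
    (hu_smooth.continuous.mul f.continuous).neg f.hasCompactSupport.mul_left.neg hγ.le
  obtain ⟨b, hb, K', hbK'⟩ := exists_primitive_abs_le_exp (h := fun x => Ψ (-x) 0 1 * f (-x))
    (by fun_prop) (f.hasCompactSupport.comp_homeomorph (.neg ℝ)).mul_left hγ.le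
  have hb' (x : ℝ) : HasDerivAt (fun x => b (-x)) (-(Ψ x 0 1 * f x)) x :=
    ((hb (-x)).comp x (hasDerivAt_neg x)).congr_deriv (by rw [neg_neg, mul_neg_one])
  have ha_smooth := contDiff_of_hasDerivAt ha (hu_smooth.mul f.contDiff).neg
  have hb_smooth := contDiff_of_hasDerivAt hb' (hv_smooth.mul f.contDiff).neg
  have hmem (i : Fin 2) : MemLp (fun x => Ψ x i 1 * a x - Ψ x i 0 * b (-x)) 2 := by
    refine (memLp_two_of_abs_le_exp_neg_abs (K := C * K)
      ((D.isSolMatrix.continuous_apply i 1).mul ha_smooth.continuous) hγ fun x => ?_).sub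
      (memLp_two_of_abs_le_exp_neg_abs (K := C * K')
      ((D.isSolMatrix.continuous_apply i 0).mul hb_smooth.continuous) hγ fun x => ?_)
    · refine (abs_mul_le_of_abs_le_exp (D.abs_col_one_le x i) (haK x)).trans_eq ?_
      ring_nf
    · refine (abs_mul_le_of_abs_le_exp (D.abs_col_zero_le x i) (hbK' (-x))).trans_eq ?_
      rw [abs_neg]
      ring_nf
  refine ⟨_, _, (hv_smooth.mul ha_smooth).sub (hu_smooth.mul hb_smooth), fun x => ?_, fun x => ?_,
    hmem 0, hmem 1⟩
  · exact (((hv.hasDerivAt x).mul (ha x)).sub ((hu.hasDerivAt x).mul (hb' x))).congr_deriv (by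
      simp only [Pi.neg_apply, Pi.mul_apply]
      ring)
  · have hdet := D.det_eq_one x
    rw [Matrix.det_fin_two] at hdet
    refine (((hv.hasDerivAt' x).mul (ha x)).sub ((hu.hasDerivAt' x).mul (hb' x))).congr_deriv ?_
    simp only [Pi.neg_apply, Pi.mul_apply]
    linear_combination (-f x) * hdet

namespace TestFn

/-- The test function `x ↦ φ (c x)`. -/
def dilate {c : ℝ} (hc : c ≠ 0) (φ : TestFn) : TestFn :=
  ⟨fun x => φ (c * x), φ.contDiff.comp (contDiff_const.mul contDiff_id),
    φ.hasCompactSupport.comp_homeomorph (.mulLeft₀ c hc), subset_univ _⟩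

theorem derivative_dilate {c : ℝ} (hc : c ≠ 0) (φ : TestFn) :
    derivative (dilate hc φ) = c • dilate hc (derivative φ) := by
  ext x
  have h := (φ.hasDerivAt (c * x)).comp x ((hasDerivAt_id x).const_mul c)
  exact ((dilate hc φ).hasDerivAt x).unique (h.congr_deriv (by rw [mul_one, mul_comm]; rfl))

theorem exists_slowly_varying_eq_one {S : Set ℝ} (hS : IsCompact S) {ε : ℝ} (hε : 0 < ε) :
    ∃ η : TestFn, (∀ x ∈ S, η x = 1) ∧ (∀ x, |derivative η x| ≤ ε) ∧
      ∀ x, |derivative (derivative η) x| ≤ ε := by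
  let bump : ContDiffBump (0 : ℝ) := ⟨1, 2, one_pos, one_lt_two⟩
  let χ : TestFn := ⟨bump, bump.contDiff, bump.hasCompactSupport, subset_univ _⟩
  obtain ⟨R, hR⟩ := hS.isBounded.subset_closedBall 0
  have hbdd (φ : TestFn) : ∃ K, ∀ x, ‖φ x‖ ≤ K :=
    φ.continuous.bounded_above_of_compact_support φ.hasCompactSupport
  obtain ⟨K₁, hK₁⟩ := hbdd (derivative χ)
  obtain ⟨K₂, hK₂⟩ := hbdd (derivative (derivative χ))
  have hsmall {F : ℝ → ℝ} (hF : Continuous F) {δ : ℝ} (hδ : F 0 < δ) : ∀ᶠ c in 𝓝[>] 0, F c < δ :=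
    hF.continuousAt.continuousWithinAt.eventually_lt_const hδ
  obtain ⟨c, hc, hcR, hc₁, hc₂⟩ := (eventually_mem_nhdsWithin.and <|
    (hsmall (F := fun c => c * R) (δ := 1) (by fun_prop) (by simp)).and <|
    (hsmall (F := fun c => c * K₁) (δ := ε) (by fun_prop) (by simpa using hε)).and
    (hsmall (F := fun c => c * (c * K₂)) (δ := ε) (by fun_prop) (by simpa using hε))).exists
  have hc₀ : (0 : ℝ) < c := hc
  refine ⟨dilate hc₀.ne' χ, fun x hx => ?_, fun x => ?_, fun x => ?_⟩
  · refine bump.one_of_mem_closedBall (mem_closedBall_zero_iff.2 ?_)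
    rw [norm_mul, Real.norm_of_nonneg hc₀.le]
    exact (mul_le_mul_of_nonneg_left (mem_closedBall_zero_iff.1 (hR hx)) hc₀.le).trans hcR.le
  · rw [derivative_dilate]
    change |c * derivative χ (c * x)| ≤ ε
    rw [abs_mul, abs_of_pos hc₀]
    exact (mul_le_mul_of_nonneg_left (hK₁ _) hc₀.le).trans hc₁.le
  · rw [derivative_dilate, map_smul, derivative_dilate]
    change |c * (c * derivative (derivative χ) (c * x))| ≤ ε
    rw [abs_mul, abs_mul, abs_of_pos hc₀]
    exact (by gcongr; exact hK₂ _ : _ ≤ c * (c * K₂)).trans hc₂.le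

theorem schrodinger_smoothMul {q φ φ' f : ℝ → ℝ} (hq : ContDiff ℝ (⊤ : ℕ∞) q)
    (hφ : ContDiff ℝ (⊤ : ℕ∞) φ) (h : ∀ x, HasDerivAt φ (φ' x) x)
    (h' : ∀ x, HasDerivAt φ' (q x * φ x - f x) x) (η : TestFn) (x : ℝ) :
    schrodinger hq (smoothMul hφ η) x =
      f x * η x - (2 * φ' x * derivative η x + φ x * derivative (derivative η) x) := by
  have hderiv : ⇑(derivative (smoothMul hφ η)) = fun x => φ' x * η x + φ x * derivative η x :=
    funext fun x => ((smoothMul hφ η).hasDerivAt x).unique ((h x).mul (η.hasDerivAt x))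
  have hderiv₂ := (derivative (smoothMul hφ η)).hasDerivAt x
  rw [hderiv] at hderiv₂
  rw [schrodinger_apply, hderiv₂.unique (((h' x).mul (η.hasDerivAt x)).add
    ((h x).mul ((derivative η).hasDerivAt x)))]
  change q x * (φ x * η x) - _ = _
  ring

/-- A slowly varying cutoff of the square-integrable solution of `-φ'' + q φ = f` solves this
equation approximately. -/
theorem toL2_mem_closure_range_schrodinger {q : ℝ → ℝ} (hq : ContDiff ℝ (⊤ : ℕ∞) q)
    {Ψ : ℝ → Mat2} {γ C : ℝ} (D : IsDichotomy q Ψ γ C) (f : TestFn) :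
    f.toL2 ∈ closure (range (toL2 ∘ₗ schrodinger hq)) := by
  obtain ⟨φ, φ', hφ, h, h', hφ₂, hφ'₂⟩ := exists_memLp_solution hq D f
  have hξ : MemLp (fun x => 2 * |φ' x| + |φ x|) 2 := (hφ'₂.abs.const_mul 2).add hφ₂.abs
  refine Metric.mem_closure_iff.2 fun ε hε => ?_
  set δ := ε / (‖hξ.toLp‖ + 1)
  obtain ⟨η, hη, hη₁, hη₂⟩ := exists_slowly_varying_eq_one f.hasCompactSupport (ε := δ)
    (by positivity)
  refine ⟨_, ⟨smoothMul hφ η, rfl⟩, ?_⟩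
  have hle : ‖(f - schrodinger hq (smoothMul hφ η)).toL2‖ ≤ δ * ‖hξ.toLp‖ := by
    refine Lp.norm_le_mul_norm_of_ae_le_mul ?_
    filter_upwards [coeFn_testToL2 (f - schrodinger hq (smoothMul hφ η)), hξ.coeFn_toLp]
      with x hx hξx
    have hfη : f x * η x = f x := by
      by_cases hx : x ∈ tsupport f
      · rw [hη x hx, mul_one]
      · rw [image_eq_zero_of_notMem_tsupport hx, zero_mul]
    have hres : (f - schrodinger hq (smoothMul hφ η)) x =
        2 * φ' x * derivative η x + φ x * derivative (derivative η) x := by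
      change f x - schrodinger hq (smoothMul hφ η) x = _
      rw [schrodinger_smoothMul hq hφ h h', hfη, sub_sub_cancel]
    rw [toL2, hx, hξx, hres, Real.norm_eq_abs, Real.norm_of_nonneg (by positivity)]
    calc _ ≤ 2 * |φ' x| * |derivative η x| + |φ x| * |derivative (derivative η) x| := by
          simpa only [abs_mul, abs_two] using
            abs_add_le (2 * φ' x * derivative η x) (φ x * derivative (derivative η) x)
      _ ≤ 2 * |φ' x| * δ + |φ x| * δ := by
          gcongr
          exacts [hη₁ x, hη₂ x]
      _ = δ * (2 * |φ' x| + |φ x|) := by ring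
  rw [dist_eq_norm, LinearMap.comp_apply, ← map_sub]
  calc _ ≤ δ * ‖hξ.toLp‖ := hle
    _ < δ * (‖hξ.toLp‖ + 1) := by gcongr; linarith
    _ = ε := by simp only [δ]; field_simp

theorem denseRange_schrodinger {q : ℝ → ℝ} (hq : ContDiff ℝ (⊤ : ℕ∞) q)
    {Ψ : ℝ → Mat2} {γ C : ℝ} (D : IsDichotomy q Ψ γ C) :
    DenseRange (toL2 ∘ₗ schrodinger hq) :=
  Dense.of_closure <| (denseRange_testToL2 (U := ⊤) (.of_forall fun _ => trivial)).mono <|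
    range_subset_iff.2 (toL2_mem_closure_range_schrodinger hq D)

end TestFn

/-! ### The resolvent -/

/-- The weak inverse is the continuous extension of `ℒ φ ↦ ι φ`. -/
theorem exists_weakInverse {V H : Type*} [AddCommGroup V] [Module ℝ V] [NormedAddCommGroup H]
    [InnerProductSpace ℝ H] [CompleteSpace H] {ι ℒ : V →ₗ[ℝ] H}
    (hsymm : ∀ φ ψ, inner ℝ (ℒ φ) (ι ψ) = inner ℝ (ι φ) (ℒ ψ))
    (hbound : ∃ C : ℝ, ∀ φ, ‖ι φ‖ ≤ C * ‖ℒ φ‖) (hdense : DenseRange ℒ) :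
    ∃ T : H →L[ℝ] H, (∀ f φ, inner ℝ (T f) (ℒ φ) = inner ℝ f (ι φ)) ∧
      ∀ g h, (∀ φ, inner ℝ g (ℒ φ) = inner ℝ h (ι φ)) → T h = g := by
  have hT (f : H) (φ : V) : inner ℝ (ι.extendOfNorm ℒ f) (ℒ φ) = inner ℝ f (ι φ) := by
    refine hdense.induction_on (p := fun f => inner ℝ (ι.extendOfNorm ℒ f) (ℒ φ) = inner ℝ f (ι φ))
      f (isClosed_eq (by fun_prop) (by fun_prop)) fun ψ => ?_
    rw [LinearMap.extendOfNorm_eq hdense hbound, hsymm]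
  refine ⟨ι.extendOfNorm ℒ, hT, fun g h hgh => hdense.eq_of_inner_left (𝕜 := ℝ) fun φ => ?_⟩
  rw [hT, hgh]

theorem weakSchrodingerEq_iff_inner {V W : ℝ → ℝ} {E : ℝ}
    (hq : ContDiff ℝ (⊤ : ℕ∞) fun x => V x - E) (hVW : W =ᵐ[volume] V) (g h : L2R) :
    WeakSchrodingerEq W E g h ↔
      ∀ φ : TestFn, inner ℝ g (TestFn.schrodinger hq φ).toL2 = inner ℝ h φ.toL2 := by
  have hoperator (φ : TestFn) : inner ℝ g (TestFn.schrodinger hq φ).toL2 =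
      ∫ x, g x * (-(deriv (deriv φ) x) + (W x - E) * φ x) := by
    refine (inner_testToL2 g _).trans (integral_congr_ae ?_)
    filter_upwards [hVW] with x hx
    rw [hx, TestFn.schrodinger_apply, TestFn.coe_derivative, TestFn.coe_derivative,
      sub_eq_neg_add]
  have hright (φ : TestFn) : inner ℝ h φ.toL2 = ∫ x, h x * φ x := inner_testToL2 h φ
  simp only [hoperator, hright]
  exact ⟨fun hw φ => hw φ φ.contDiff φ.hasCompactSupport,
    fun hw φ hφ hφs => hw ⟨φ, hφ, hφs, subset_univ _⟩⟩

theorem notMem_contSpectrum {V W : ℝ → ℝ} {E : ℝ} (hV : ContDiff ℝ (⊤ : ℕ∞) V)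
    (hVW : W =ᵐ[volume] V) {Ψ : ℝ → Mat2} {γ C : ℝ} (D : IsDichotomy (fun x => V x - E) Ψ γ C) :
    E ∉ ContSpectrum W := by
  have hq : ContDiff ℝ (⊤ : ℕ∞) fun x => V x - E := hV.sub contDiff_const
  obtain ⟨T, hT, hinv⟩ := exists_weakInverse (ι := TestFn.toL2)
    (ℒ := TestFn.toL2 ∘ₗ TestFn.schrodinger hq) (TestFn.inner_schrodinger_left hq)
    ⟨_, TestFn.norm_toL2_le_schrodinger hq D⟩ (TestFn.denseRange_schrodinger hq D)
  simp only [ContSpectrum, mem_ofPred_eq, not_not, weakSchrodingerEq_iff_inner hq hVW]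
  exact ⟨T, hT, hinv⟩

/-! ### Repeated blocks -/

section Repeat

variable {a : ℝ} {n : ℕ}

/-- `χ` is the `n`-fold concatenation `φ^{♯n}`, expressed by almost everywhere values on the blocks
`[ja, (j+1)a)` as in `repeatSet`. -/
def IsRepeat (χ : L2I (n * a)) (φ : L2I a) : Prop :=
  ∀ j : ℕ, j < n → ∀ᵐ t ∂(volume.restrict (Ico (0 : ℝ) a)), χ (t + j * a) = φ t

theorem ae_of_forall_ae_translate (ha : 0 < a) {p : ℝ → Prop}
    (h : ∀ k : ℤ, ∀ᵐ t ∂(volume.restrict (Ico (0 : ℝ) a)), p (t + k * a)) : ∀ᵐ t, p t := by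
  have hshift (k : ℤ) : ∀ᵐ t : ℝ, t - k * a ∈ Ico 0 a → p (t - k * a + k * a) :=
    (measurePreserving_sub_right volume (k * a)).quasiMeasurePreserving.ae
      ((ae_restrict_iff' measurableSet_Ico).1 (h k))
  filter_upwards [ae_all_iff.2 hshift] with t ht
  simpa only [sub_add_cancel] using ht ⌊t / a⌋ ((floor_div_eq_iff ha).1 rfl)

theorem SmoothBlock.exists_isRepeat (ha : 0 < a) (n : ℕ) (ψ : SmoothBlock a) :
    ∃ χ : L2I (n * a), IsRepeat χ ψ.toL2 := by
  have hmem : MemLp (glue a fun _ => ψ) 2 (volume.restrict (Ico (0 : ℝ) (n * a))) := by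
    obtain ⟨K, hK⟩ := ψ.continuous.bounded_above_of_compact_support ψ.hasCompactSupport
    exact .of_bound (contDiff_glue ha _).continuous.aestronglyMeasurable K
      (.of_forall fun t => hK _)
  refine ⟨hmem.toLp, fun j hj => ?_⟩
  have hχ : ∀ᵐ t : ℝ, t + j * a ∈ Ico 0 (n * a) →
      hmem.toLp _ (t + j * a) = glue a (fun _ => ψ) (t + j * a) :=
    (measurePreserving_add_right volume (j * a)).quasiMeasurePreserving.ae
      ((ae_restrict_iff' measurableSet_Ico).1 hmem.coeFn_toLp)
  filter_upwards [coeFn_testToL2 ψ, ae_restrict_of_ae hχ, ae_restrict_mem measurableSet_Ico]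
    with t hψt hχt ht
  have hj' : (j : ℝ) + 1 ≤ n := by exact_mod_cast hj
  have htj : t + j * a - (j : ℤ) * a = t := by rw [Int.cast_natCast, add_sub_cancel_right]
  rw [hχt ⟨by have := ht.1; positivity, by nlinarith [ht.2]⟩,
    glue_apply ha _ (k := j) (htj.symm ▸ Ico_subset_Icc_self ht), htj, SmoothBlock.toL2, hψt]

theorem intervalIntegral_natCast_mul {F : ℝ → ℝ} (ha : 0 ≤ a)
    (hF : IntervalIntegrable F volume 0 (n * a)) :
    ∫ t in 0..n * a, F t = ∑ j ∈ Finset.range n, ∫ t in 0..a, F (t + j * a) := by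
  have hna : 0 ≤ n * a := by positivity
  have hadd := intervalIntegral.sum_integral_adjacent_intervals (μ := volume) (f := F)
    (a := fun j : ℕ => j * a) (n := n) fun j hj => by
      refine hF.mono_set ?_
      have hj' : ((j + 1 : ℕ) : ℝ) ≤ n := by exact_mod_cast hj
      rw [uIcc_of_le hna, uIcc_of_le (by gcongr; simp)]
      exact Icc_subset_Icc (by positivity) (by gcongr)
  rw [Nat.cast_zero, zero_mul] at hadd
  refine hadd.symm.trans (Finset.sum_congr rfl fun j _ => ?_)
  rw [intervalIntegral.integral_comp_add_right, zero_add, Nat.cast_succ, add_one_mul, add_comm a]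

theorem dist_sq_eq_intervalIntegral {b : ℝ} (hb : 0 ≤ b) (f g : L2I b) :
    dist f g ^ 2 = ∫ t in 0..b, (f t - g t) ^ 2 := by
  rw [intervalIntegral.integral_of_le hb, ← integral_Ico_eq_integral_Ioc, dist_eq_norm,
    ← real_inner_self_eq_norm_sq, L2.inner_def]
  refine integral_congr_ae ?_
  filter_upwards [Lp.coeFn_sub f g] with x hx
  rw [hx, real_inner_self_eq_norm_sq, Real.norm_eq_abs, sq_abs, Pi.sub_apply]

theorem IsRepeat.dist_eq (ha : 0 ≤ a) {χ₁ χ₂ : L2I (n * a)} {φ₁ φ₂ : L2I a}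
    (h₁ : IsRepeat χ₁ φ₁) (h₂ : IsRepeat χ₂ φ₂) : dist χ₁ χ₂ = √n * dist φ₁ φ₂ := by
  have hna : 0 ≤ n * a := by positivity
  have hint : IntervalIntegrable (fun t => (χ₁ t - χ₂ t) ^ 2) volume 0 (n * a) := by
    rw [intervalIntegrable_iff_integrableOn_Ico_of_le hna]
    exact ((Lp.memLp χ₁).sub (Lp.memLp χ₂)).integrable_sq
  have hblock (j : ℕ) (hj : j ∈ Finset.range n) :
      ∫ t in 0..a, (χ₁ (t + j * a) - χ₂ (t + j * a)) ^ 2 = dist φ₁ φ₂ ^ 2 := by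
    rw [dist_sq_eq_intervalIntegral ha, intervalIntegral.integral_of_le ha,
      intervalIntegral.integral_of_le ha, ← restrict_Ico_eq_restrict_Ioc]
    refine integral_congr_ae ?_
    filter_upwards [h₁ j (Finset.mem_range.1 hj), h₂ j (Finset.mem_range.1 hj)] with t ht₁ ht₂
    rw [ht₁, ht₂]
  refine (sq_eq_sq₀ dist_nonneg (by positivity)).1 ?_
  rw [dist_sq_eq_intervalIntegral hna, intervalIntegral_natCast_mul ha hint,
    Finset.sum_congr rfl hblock, Finset.sum_const, Finset.card_range, nsmul_eq_mul, mul_pow,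
    Real.sq_sqrt n.cast_nonneg]

theorem aggC_ae_eq_glue (ha : 0 < a) (hn : 0 < n) {y : ℤ → L2I (n * a)} {Q : ℤ → SmoothBlock a}
    (hy : ∀ k, IsRepeat (y k) (Q k).toL2) :
    aggC (n * a) y =ᵐ[volume] glue a fun k => Q (k / n) := by
  refine ae_of_forall_ae_translate ha fun k => ?_
  have hn₀ : (n : ℤ) ≠ 0 := by exact_mod_cast hn.ne'
  have hmod : (((k % n).toNat : ℕ) : ℤ) = k % n := Int.toNat_of_nonneg (Int.emod_nonneg k hn₀)
  have hlt : (k % n).toNat < n := by have := Int.emod_lt_of_pos k (Int.natCast_pos.2 hn); omega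
  filter_upwards [hy (k / n) _ hlt, coeFn_testToL2 (Q (k / n)), ae_restrict_mem measurableSet_Ico]
    with t hχ hQ ht
  have htk : t + k * a - k * a = t := add_sub_cancel_right _ _
  have hfloor : ⌊(t + k * a) / (n * a)⌋ = k / n := by
    rw [mul_comm (n : ℝ), ← div_div, Int.floor_div_natCast, (floor_div_eq_iff ha).2 (htk.symm ▸ ht)]
  have hoffset : t + k * a - (k / n : ℤ) * (n * a) = t + (k % n).toNat * a := by
    have hk : ((n * (k / n) + (k % n).toNat : ℤ) : ℝ) = k := by
      rw [hmod, Int.mul_ediv_add_emod]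
    push_cast at hk
    linear_combination (-a) * hk
  rw [aggC, hfloor, hoffset, hχ, glue_apply ha _ (htk.symm ▸ Ico_subset_Icc_self ht), htk,
    SmoothBlock.toL2, hQ]

theorem notMem_contSpectrum_aggC (ha : 0 < a) (hn : 0 < n) {l : ℕ} (hl : 0 < l) {E : ℝ}
    {y : ℤ → L2I (n * a)} {Q : ℤ → SmoothBlock a} (hy : ∀ k, IsRepeat (y k) (Q k).toL2)
    (hQ : Function.Periodic Q l)
    (hyp : (cocycle (fun i : ℕ => (Q i).transfer E ^ n) l).IsHyperbolic) :
    E ∉ ContSpectrum (aggC (n * a) y) := by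
  set P : ℤ → SmoothBlock a := fun k => Q (k / n)
  have hper : Function.Periodic (glue a P) ((n * l : ℕ) * a) := periodic_glue ha fun k => by
    simp only [P]
    rw [Nat.cast_mul, Int.add_mul_ediv_left _ _ (by exact_mod_cast hn.ne'), hQ]
  have hcocycle : cocycle (fun k : ℕ => (P k).transfer E) (n * l) =
      cocycle (fun i : ℕ => (Q i).transfer E ^ n) l := by
    rw [cocycle_mul]
    refine cocycle_congr fun i _ => ?_
    rw [← cocycle_const]
    refine cocycle_congr fun r hr => ?_
    simp only [P]
    rw [← Int.natCast_div, Nat.mul_add_div hn, Nat.div_eq_of_lt hr, add_zero]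
  obtain ⟨Ψ, γ, C, D⟩ := exists_isDichotomy (by positivity) (fun t => by rw [hper t])
    (isTransfer_glue ha P E (n * l)) (hcocycle ▸ hyp)
  exact notMem_contSpectrum (contDiff_glue ha P) (aggC_ae_eq_glue ha hn hy) D

end Repeat

section PerExt

variable {α β : Type*} [Zero α] [Zero β]

theorem perExt_of_pos {l : ℕ} (hl : 0 < l) (f : ℕ → α) (k : ℤ) :
    perExt (fun i : Fin l => f i) k = f (k % l).toNat := by
  simp only [perExt, hl, dif_pos]

theorem periodic_perExt {m : ℕ} (w : Fin m → α) : Function.Periodic (perExt w) m := fun k => by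
  simp only [perExt, Int.add_emod_right]

theorem perExt_rel {r : α → β → Prop} {m : ℕ} (hm : 0 < m) {v : Fin m → α} {w : Fin m → β}
    (h : ∀ i, r (v i) (w i)) (k : ℤ) : r (perExt v k) (perExt w k) := by
  simpa only [perExt, hm, dif_pos] using h _

end PerExt

theorem exists_isHyperbolic_perExt {a : ℝ} (ha : 0 < a) (E : ℝ) {φ : ℤ → L2I a} {m n : ℕ}
    (hm : 0 < m) (hφ : Function.Periodic φ m) {ε : ℝ} (hε : 0 < ε) (hn : 0 < n) :
    ∃ l > 0, ∃ Q : Fin l → SmoothBlock a, (∀ k, dist (φ k) (perExt Q k).toL2 < ε) ∧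
      (cocycle (fun i : ℕ => SmoothBlock.transfer E (perExt Q i) ^ n) l).IsHyperbolic := by
  obtain ⟨K, hK, ψ, hclose, hyp⟩ := exists_isHyperbolic_smoothBlock_word ha E hm
    (φ := fun i => φ i) (fun i => mod_cast hφ i) hε hn
  have hl : 0 < m * K := Nat.mul_pos hm hK
  have hl₀ : ((m * K : ℕ) : ℤ) ≠ 0 := by exact_mod_cast hl.ne'
  refine ⟨m * K, hl, fun i => ψ i, fun k => ?_, ?_⟩
  · have hk : φ (k % (m * K : ℕ)).toNat = φ k := by
      rw [Int.toNat_of_nonneg (Int.emod_nonneg _ hl₀), Int.emod_def, Nat.cast_mul, mul_assoc,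
        mul_comm]
      exact hφ.sub_int_mul_eq _
    rw [perExt_of_pos hl, ← hk]
    exact hclose _
  · convert hyp using 1
    refine cocycle_congr fun i hi => ?_
    rw [perExt_of_pos hl, Int.emod_eq_of_lt i.cast_nonneg (by exact_mod_cast hi), Int.toNat_natCast]

/-- Fix `a > 0` and `n ∈ ℕ`. The set `{φ^{♯n} : φ ∈ L²([0,a))} ⊆ L²([0,na))`
is gap-rich with empty exceptional set. -/
theorem repeat_word_gapRich (a : ℝ) (ha : 0 < a) (n : ℕ) (hn : 0 < n) :
    GapRichC (n * a) (repeatSet a n) (∅ : Set ℝ) := by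
  refine ⟨fun x h => by simp [AccPt, Filter.neBot_iff] at h, fun E _ m hm x hx ε hε => ?_⟩
  choose φ hφ using (hx : ∀ i, ∃ φ, IsRepeat (x i) φ)
  have hx (k : ℤ) : IsRepeat (perExt x k) (perExt φ k) := perExt_rel hm hφ k
  have hn' : 0 < √(n : ℝ) := by positivity
  obtain ⟨l, hl, Q, hclose, hyp⟩ :=
    exists_isHyperbolic_perExt ha E hm (periodic_perExt φ) (div_pos hε hn') hn
  choose χ hχ using fun i => (Q i).exists_isRepeat ha n
  have hy (k : ℤ) : IsRepeat (perExt χ k) (perExt Q k).toL2 :=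
    perExt_rel (r := fun χ Q => IsRepeat χ (SmoothBlock.toL2 Q)) hl hχ k
  refine ⟨l, hl, χ, fun i => ⟨_, hχ i⟩, fun k => ?_,
    notMem_contSpectrum_aggC ha hn hl hy (periodic_perExt Q) hyp⟩
  rw [(hx k).dist_eq ha.le (hy k), ← lt_div_iff₀' hn']
  exact hclose k
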